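/- arXiv:math/0610023 — 12 statements merged into one kernel-verified Lean document; each statement's English description precedes it below -/
import Mathlib

section
/- Let Γ be a connected cubic graph of order n. Then n/2 ≤ γ_ô(Γ) ≤ 3n/4, where γ_ô(Γ) is the global strong offensive alliance number of Γ. -/
/-- A nonempty set `S` of vertices is a *global strong offensive alliance* if every vertex
outside `S` has at least two more neighbors inside `S` than outside `S`. -/
def SimpleGraph.IsGlobalStrongOffensiveAlliance {V : Type*} (G : SimpleGraph V) (S : Set V) :
    Prop :=
  S.Nonempty ∧ ∀ v ∉ S, (G.neighborSet v \ S).ncard + 2 ≤ (G.neighborSet v ∩ S).ncard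

/-- The *global strong offensive alliance number*: the minimum cardinality of a global strong
offensive alliance. -/
noncomputable def SimpleGraph.globalStrongOffensiveAllianceNum {V : Type*} (G : SimpleGraph V) :
    ℕ :=
  sInf {k | ∃ S : Set V, G.IsGlobalStrongOffensiveAlliance S ∧ S.ncard = k}

theorem stmt_0 {V : Type*} [Fintype V] (G : SimpleGraph V)
    (hconn : G.Connected) (hcubic : ∀ v : V, (G.neighborSet v).ncard = 3) :
    (Fintype.card V : ℝ) / 2 ≤ G.globalStrongOffensiveAllianceNum ∧
      (G.globalStrongOffensiveAllianceNum : ℝ) ≤ 3 * Fintype.card V / 4 := by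
  classical
  have hdeg : ∀ v : V, (G.neighborFinset v).card = 3 := by
    intro v
    rw [← hcubic v, ← Set.ncard_coe_finset, SimpleGraph.coe_neighborFinset]
  obtain ⟨v0⟩ := hconn.nonempty
  -- alliances have independent complement
  have hind : ∀ S : Set V, G.IsGlobalStrongOffensiveAlliance S →
      ∀ v ∉ S, ∀ w, G.Adj v w → w ∈ S := by
    intro S hS v hv w hvw
    by_contra hw
    have h1 := hS.2 v hv
    have h2 := Set.ncard_inter_add_ncard_diff_eq_ncard (G.neighborSet v) S (Set.toFinite _)
    rw [hcubic v] at h2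
    have h3 : 0 < (G.neighborSet v \ S).ncard :=
      (Set.ncard_pos (Set.toFinite _)).2 ⟨w, hvw, hw⟩
    omega
  have hlow : ∀ S : Set V, G.IsGlobalStrongOffensiveAlliance S →
      Fintype.card V ≤ 2 * S.ncard := by
    intro S hS
    have key := Finset.card_mul_le_card_mul (s := S.toFinsetᶜ) (t := S.toFinset) (m := 3) (n := 3)
      G.Adj (by
        intro a ha
        rw [← hdeg a]
        apply Finset.card_le_card
        intro w hw
        have haw : G.Adj a w := by simpa using hw
        have haS : a ∉ S := by simpa using ha
        simp [Finset.mem_bipartiteAbove, haw, hind S hS a haS w haw]) (by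
        intro b hb
        rw [← hdeg b]
        apply Finset.card_le_card
        intro w hw
        have := ((Finset.mem_bipartiteBelow G.Adj).1 hw).2
        simpa using this.symm)
    have h1 := Finset.card_add_card_compl S.toFinset
    have h2 : S.ncard = S.toFinset.card := Set.ncard_eq_toFinset_card' S
    omega
  have hup : ∃ S : Set V, G.IsGlobalStrongOffensiveAlliance S ∧
      4 * S.ncard ≤ 3 * Fintype.card V := by
    obtain ⟨I, hI, hmax⟩ := Finset.exists_max_image
      ((Finset.univ : Finset (Finset V)).filter (fun I => ∀ a ∈ I, ∀ b ∈ I, ¬ G.Adj a b))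
      Finset.card ⟨∅, by simp⟩
    have hI : ∀ a ∈ I, ∀ b ∈ I, ¬ G.Adj a b := by simpa using hI
    have hdom : ∀ v, v ∉ I → ∃ a ∈ I, G.Adj a v := by
      intro v hv
      by_contra! hcon
      have h := hmax (insert v I) (by
        simp only [Finset.mem_filter, Finset.mem_univ, true_and, Finset.mem_insert]
        rintro a (rfl | ha) b (rfl | hb)
        · exact G.loopless.irrefl _
        · exact fun h => hcon b hb h.symm
        · exact hcon a ha
        · exact hI a ha b hb)
      rw [Finset.card_insert_of_notMem hv] at h
      omega
    have hcard : Fintype.card V ≤ I.card * 4 := by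
      rw [← Finset.card_univ]
      refine le_trans (Finset.card_le_card (t := I.biUnion fun a => insert a (G.neighborFinset a))
        ?_) (Finset.card_biUnion_le_card_mul _ _ _ ?_)
      · intro v _
        by_cases hv : v ∈ I
        · exact Finset.mem_biUnion.2 ⟨v, hv, by simp⟩
        · obtain ⟨a, ha, hav⟩ := hdom v hv
          exact Finset.mem_biUnion.2 ⟨a, ha, by simp [hav]⟩
      · intro a _
        refine (Finset.card_insert_le _ _).trans ?_
        rw [hdeg]
    refine ⟨((Iᶜ : Finset V) : Set V), ⟨?_, ?_⟩, ?_⟩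
    · by_cases hv : v0 ∈ I
      · have : (G.neighborFinset v0).Nonempty := by
          rw [← Finset.card_pos, hdeg]; norm_num
        obtain ⟨w, hw⟩ := this
        refine ⟨w, ?_⟩
        have hw : G.Adj v0 w := by simpa using hw
        simpa using fun h => hI v0 hv w h hw
      · exact ⟨v0, by simpa using hv⟩
    · intro v hv
      have hv : v ∈ I := by simpa using hv
      have hsub : G.neighborSet v ⊆ ((Iᶜ : Finset V) : Set V) := by
        intro w hw
        simpa using fun h => hI v hv w h hw
      rw [Set.inter_eq_left.2 hsub, Set.diff_eq_empty.2 hsub, hcubic v]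
      simp
    · rw [Set.ncard_coe_finset]
      have := Finset.card_add_card_compl I
      omega
  obtain ⟨S, hS, hSc⟩ := hup
  have hmem := Nat.sInf_mem
    (s := {k | ∃ S : Set V, G.IsGlobalStrongOffensiveAlliance S ∧ S.ncard = k}) ⟨_, S, hS, rfl⟩
  have hle : G.globalStrongOffensiveAllianceNum ≤ S.ncard := Nat.sInf_le ⟨S, hS, rfl⟩
  obtain ⟨T, hT, hTc⟩ := hmem
  have h1 := hlow T hT
  change T.ncard = G.globalStrongOffensiveAllianceNum at hTc
  rw [hTc] at h1
  have h2 : 4 * G.globalStrongOffensiveAllianceNum ≤ 3 * Fintype.card V := by omega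
  have h1' : (Fintype.card V : ℝ) ≤ 2 * G.globalStrongOffensiveAllianceNum := by exact_mod_cast h1
  have h2' : 4 * (G.globalStrongOffensiveAllianceNum : ℝ) ≤ 3 * Fintype.card V := by
    exact_mod_cast h2
  constructor <;> linarith
end

section
/- Let Γ be a connected cubic graph of order n. Then γ_ô(Γ) = n/2 if and only if Γ is a bipartite graph, where γ_ô(Γ) is the global strong offensive alliance number of Γ. -/
open Classical in
theorem alliance_iff_aux {V : Type*} [Fintype V] (G : SimpleGraph V)
    (hcubic : ∀ v : V, (G.neighborSet v).ncard = 3) (S : Set V) :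
    G.IsGlobalStrongOffensiveAlliance S ↔
      S.Nonempty ∧ ∀ v ∉ S, ∀ w, G.Adj v w → w ∈ S := by
  unfold SimpleGraph.IsGlobalStrongOffensiveAlliance
  refine and_congr_right fun _ => forall_congr' fun v => forall_congr' fun _ => ?_
  have h := Set.ncard_inter_add_ncard_diff_eq_ncard (G.neighborSet v) S (Set.toFinite _)
  rw [hcubic v] at h
  constructor
  · intro h2 w hw
    have h0 : (G.neighborSet v \ S).ncard = 0 := by omega
    rw [Set.ncard_eq_zero (Set.toFinite _)] at h0
    by_contra hS
    have : w ∈ G.neighborSet v \ S := ⟨hw, hS⟩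
    rw [h0] at this
    exact this
  · intro h2
    have h0 : (G.neighborSet v \ S) = ∅ := by
      ext w
      simp only [Set.mem_diff, SimpleGraph.mem_neighborSet, Set.mem_empty_iff_false, iff_false]
      exact fun hw => hw.2 (h2 w hw.1)
    rw [h0, Set.ncard_empty] at h ⊢
    omega

open Classical in
theorem count_aux {V : Type*} [Fintype V] (G : SimpleGraph V)
    (hcubic : ∀ v : V, (G.neighborSet v).ncard = 3) (S : Finset V)
    (hS : ∀ v ∉ S, ∀ w, G.Adj v w → w ∈ S) :
    Fintype.card V ≤ 2 * S.card ∧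
    (Fintype.card V = 2 * S.card → ∀ v ∈ S, ∀ w, G.Adj v w → w ∉ S) := by
  have hn : ∀ v, (G.neighborFinset v).card = 3 := by
    intro v
    rw [← hcubic v, ← Set.ncard_coe_finset, SimpleGraph.coe_neighborFinset]
  have key := Finset.sum_card_bipartiteAbove_eq_sum_card_bipartiteBelow (s := Sᶜ) (t := S) G.Adj
  have hA : ∀ v ∈ Sᶜ, (Finset.bipartiteAbove G.Adj S v).card = 3 := by
    intro v hv
    rw [← hn v]
    congr 1
    ext w
    simp only [Finset.mem_bipartiteAbove, SimpleGraph.mem_neighborFinset]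
    exact ⟨fun h => h.2, fun h => ⟨hS v (by simpa using hv) w h, h⟩⟩
  have hsub : ∀ v, Finset.bipartiteBelow G.Adj Sᶜ v ⊆ G.neighborFinset v := by
    intro v w hw
    simp only [Finset.mem_bipartiteBelow, SimpleGraph.mem_neighborFinset] at hw ⊢
    exact hw.2.symm
  have hB : ∀ v ∈ S, (Finset.bipartiteBelow G.Adj Sᶜ v).card ≤ 3 := by
    intro v _
    rw [← hn v]
    exact Finset.card_le_card (hsub v)
  rw [Finset.sum_const_nat hA] at key
  have hle := Finset.sum_le_sum hB
  have hc := Finset.card_add_card_compl S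
  simp only [Finset.sum_const, smul_eq_mul] at hle
  refine ⟨by omega, fun he v hv w hw hwS => ?_⟩
  have heq : ∑ i ∈ S, (Finset.bipartiteBelow G.Adj Sᶜ i).card = ∑ i ∈ S, 3 := by
    simp only [Finset.sum_const, smul_eq_mul]
    omega
  have h3 := (Finset.sum_eq_sum_iff_of_le hB).1 heq v hv
  have h4 := Finset.eq_of_subset_of_card_le (hsub v) (by rw [hn v, h3])
  have h5 : w ∈ Finset.bipartiteBelow G.Adj Sᶜ v := by
    rw [h4]; simpa using hw
  simp only [Finset.mem_bipartiteBelow, Finset.mem_compl] at h5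
  exact h5.1 hwS

theorem stmt_1 {V : Type*} [Fintype V] (G : SimpleGraph V)
    (hconn : G.Connected) (hcubic : ∀ v : V, (G.neighborSet v).ncard = 3) :
    (G.globalStrongOffensiveAllianceNum : ℝ) = Fintype.card V / 2 ↔ G.Colorable 2 := by
  classical
  obtain ⟨v0⟩ := hconn.nonempty
  have hcast : (G.globalStrongOffensiveAllianceNum : ℝ) = Fintype.card V / 2 ↔
      Fintype.card V = 2 * G.globalStrongOffensiveAllianceNum := by
    rw [eq_div_iff (by norm_num)]
    constructor
    · intro h
      have : ((Fintype.card V : ℕ) : ℝ) = ((2 * G.globalStrongOffensiveAllianceNum : ℕ) : ℝ) := by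
        push_cast; linarith
      exact_mod_cast this
    · intro h
      rw [h]; push_cast; ring
  rw [hcast]
  have hne : {k | ∃ S : Set V, G.IsGlobalStrongOffensiveAlliance S ∧ S.ncard = k}.Nonempty :=
    ⟨_, Set.univ, (alliance_iff_aux G hcubic _).2
      ⟨⟨v0, trivial⟩, fun _ _ _ _ => trivial⟩, rfl⟩
  obtain ⟨S, hSa, hSc⟩ := Nat.sInf_mem hne
  change S.ncard = G.globalStrongOffensiveAllianceNum at hSc
  have hS := ((alliance_iff_aux G hcubic S).1 hSa).2
  have hcount := count_aux G hcubic S.toFinset (by simpa using hS)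
  rw [← Set.ncard_eq_toFinset_card', hSc] at hcount
  constructor
  · intro h
    have h2 := hcount.2 h
    simp only [Set.mem_toFinset] at h2
    refine ⟨SimpleGraph.Coloring.mk (fun v => if v ∈ S then (0 : Fin 2) else 1) ?_⟩
    intro v w hvw
    by_cases hv : v ∈ S
    · simp [hv, h2 v hv w hvw]
    · simp [hv, hS v hv w hvw]
  · rintro ⟨C⟩
    have hex : ∀ v, ∃ w, G.Adj v w := by
      intro v
      have : (G.neighborSet v).Nonempty := by
        rw [← Set.ncard_pos (Set.toFinite _), hcubic v]; norm_num
      exact this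
    have main : ∀ c : Fin 2, G.globalStrongOffensiveAllianceNum ≤
        (Finset.univ.filter (fun v => C v = c)).card := by
      intro c
      refine Nat.sInf_le ⟨{v | C v = c}, (alliance_iff_aux G hcubic _).2 ⟨?_, ?_⟩, ?_⟩
      · obtain ⟨w, hw⟩ := hex v0
        have := C.valid hw
        by_cases h : C v0 = c
        · exact ⟨v0, h⟩
        · refine ⟨w, ?_⟩
          change C w = c
          omega
      · intro v hv w hw
        have := C.valid hw
        change ¬ C v = c at hv
        change C w = c
        omega
      · rw [← Set.ncard_coe_finset]; simp
    have h0 := main 0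
    have h1 := main 1
    have hs := Finset.card_filter_add_card_filter_not (s := (Finset.univ : Finset V)) (fun v => C v = 0)
    have he : (Finset.univ.filter (fun v => ¬ C v = 0)) = Finset.univ.filter (fun v => C v = 1) := by
      ext v
      simp only [Finset.mem_filter, Finset.mem_univ, true_and]
      omega
    rw [he, Finset.card_univ] at hs
    have := hcount.1
    omega
end

section
/- Let Γ=(V,E) be a connected cubic graph of order n. A set S ⊆ V is a global strong offensive alliance in Γ if and only if S is a 3-dominating set of Γ; consequently γ_ô(Γ) = n − α(Γ), where γ_ô(Γ) is the global strong offensive alliance number and α(Γ) is the independence number of Γ. -/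
/-- A set `S` is a *`k`-dominating set* if every vertex outside `S` has at least `k`
neighbors in `S`. -/
def SimpleGraph.IsKDominating {V : Type*} (G : SimpleGraph V) (k : ℕ) (S : Set V) : Prop :=
  ∀ v ∉ S, k ≤ (G.neighborSet v ∩ S).ncard

/-- A set of vertices is *independent* if its elements are pairwise nonadjacent. -/
def SimpleGraph.IsIndepVertexSet {V : Type*} (G : SimpleGraph V) (S : Set V) : Prop :=
  S.Pairwise fun u v => ¬ G.Adj u v

/-- The *independence number*: the maximum cardinality of an independent set of vertices. -/
noncomputable def SimpleGraph.indepNumber {V : Type*} (G : SimpleGraph V) : ℕ :=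
  sSup {k | ∃ S : Set V, G.IsIndepVertexSet S ∧ S.ncard = k}

theorem stmt_3 {V : Type*} [Fintype V] (G : SimpleGraph V)
    (hconn : G.Connected) (hcubic : ∀ v : V, (G.neighborSet v).ncard = 3) :
    (∀ S : Set V, G.IsGlobalStrongOffensiveAlliance S ↔ G.IsKDominating 3 S) ∧
      G.globalStrongOffensiveAllianceNum = Fintype.card V - G.indepNumber := by
  have hcard : ∀ (S : Set V) (v : V),
      (G.neighborSet v ∩ S).ncard + (G.neighborSet v \ S).ncard = 3 := by
    intro S v
    rw [Set.ncard_inter_add_ncard_diff_eq_ncard _ _ (Set.toFinite _), hcubic]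
  have h1 : ∀ S : Set V, G.IsGlobalStrongOffensiveAlliance S ↔ G.IsKDominating 3 S := by
    intro S
    constructor
    · rintro ⟨_, h⟩ v hv
      have := h v hv
      have := hcard S v
      omega
    · intro h
      refine ⟨?_, ?_⟩
      · by_contra hne
        rw [Set.not_nonempty_iff_eq_empty] at hne
        subst hne
        obtain ⟨v⟩ := hconn.nonempty
        have := h v (by simp)
        simp at this
      · intro v hv
        have := h v hv
        have := hcard S v
        omega
  have h2 : ∀ S : Set V, G.IsKDominating 3 S ↔ G.IsIndepVertexSet Sᶜ := by
    intro S
    constructor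
    · intro h u hu v hv _ huv
      have h3 := h u hu
      have h4 := hcard S u
      have h5 : (G.neighborSet u \ S).ncard = 0 := by omega
      rw [Set.ncard_eq_zero (Set.toFinite _)] at h5
      have h6 : v ∈ G.neighborSet u \ S := ⟨huv, hv⟩
      rw [h5] at h6
      exact h6
    · intro h v hv
      have h5 : G.neighborSet v \ S = ∅ := by
        ext w
        simp only [Set.mem_diff, SimpleGraph.mem_neighborSet, Set.mem_empty_iff_false, iff_false]
        rintro ⟨hvw, hw⟩
        exact h hv hw hvw.ne hvw
      have h4 := hcard S v
      rw [h5, Set.ncard_empty] at h4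
      omega
  refine ⟨h1, ?_⟩
  have hcompl : ∀ S : Set V, S.ncard + Sᶜ.ncard = Fintype.card V := by
    intro S
    rw [Set.ncard_add_ncard_compl, Nat.card_eq_fintype_card]
  have hbdd : BddAbove {k | ∃ S : Set V, G.IsIndepVertexSet S ∧ S.ncard = k} := by
    refine ⟨Fintype.card V, ?_⟩
    rintro k ⟨S, _, rfl⟩
    have := hcompl S
    omega
  have hne : {k | ∃ S : Set V, G.IsIndepVertexSet S ∧ S.ncard = k}.Nonempty :=
    ⟨0, ∅, Set.pairwise_empty _, Set.ncard_empty _⟩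
  obtain ⟨I, hI, hIc⟩ := Nat.sSup_mem hne hbdd
  have hIall : G.IsGlobalStrongOffensiveAlliance Iᶜ := by
    rw [h1, h2, compl_compl]
    exact hI
  change I.ncard = G.indepNumber at hIc
  have hI' := hcompl I
  apply le_antisymm
  · exact Nat.sInf_le ⟨Iᶜ, hIall, by omega⟩
  · refine le_csInf ⟨_, Iᶜ, hIall, rfl⟩ ?_
    rintro k ⟨S, hS, rfl⟩
    rw [h1, h2] at hS
    have h7 : Sᶜ.ncard ≤ G.indepNumber := le_csSup hbdd ⟨Sᶜ, hS, rfl⟩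
    have := hcompl S
    omega
end

section
/- Let Γ₁ be a connected graph whose line graph Γ = L(Γ₁) is a connected cubic graph of order n ≥ 6. Then γ_ô(Γ) = 2γ_ô(Γ₁) = 2n/3, where γ_ô denotes the global strong offensive alliance number. -/
open Finset in
theorem aux_deg_sum {V : Type*} [Fintype V] [DecidableEq V] (G : SimpleGraph V)
    [DecidableRel G.Adj] {u v : V} (h : G.Adj u v) :
    (G.lineGraph.neighborSet ⟨s(u, v), h⟩).ncard + 2 = G.degree u + G.degree v := by
  have h1 : (Subtype.val '' (G.lineGraph.neighborSet ⟨s(u, v), h⟩) : Set (Sym2 V)) =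
      (((G.incidenceFinset u ∪ G.incidenceFinset v).erase s(u, v) : Finset (Sym2 V)) :
        Set (Sym2 V)) := by
    ext e
    simp only [Set.mem_image, SimpleGraph.mem_neighborSet, SimpleGraph.lineGraph,
      coe_erase, coe_union, SimpleGraph.coe_incidenceFinset, SimpleGraph.incidenceSet,
      Set.mem_sdiff, Set.mem_union, Set.mem_singleton_iff, Set.mem_ofPred_eq]
    constructor
    · rintro ⟨⟨e', he'⟩, ⟨hne, x, hx1, hx2⟩, rfl⟩
      refine ⟨?_, fun h' => hne (Subtype.ext h'.symm)⟩
      have hx1' : x ∈ s(u, v) := hx1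
      have hx2' : x ∈ e' := hx2
      rcases Sym2.mem_iff.1 hx1' with rfl | rfl
      · exact Or.inl ⟨he', hx2'⟩
      · exact Or.inr ⟨he', hx2'⟩
    · rintro ⟨h1, hne⟩
      rcases h1 with ⟨he, hx⟩ | ⟨he, hx⟩
      · exact ⟨⟨e, he⟩, ⟨fun h' => hne (congrArg Subtype.val h').symm, u,
          Sym2.mem_mk_left u v, hx⟩, rfl⟩
      · exact ⟨⟨e, he⟩, ⟨fun h' => hne (congrArg Subtype.val h').symm, v,
          Sym2.mem_mk_right u v, hx⟩, rfl⟩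
  have h2 : (G.lineGraph.neighborSet ⟨s(u, v), h⟩).ncard =
      #((G.incidenceFinset u ∪ G.incidenceFinset v).erase s(u, v)) := by
    rw [← Set.ncard_image_of_injective _ Subtype.val_injective, h1, Set.ncard_coe_finset]
  have hmu : s(u, v) ∈ G.incidenceFinset u := by
    rw [SimpleGraph.mem_incidenceFinset]; exact ⟨h, Sym2.mem_mk_left u v⟩
  have h3 : G.incidenceFinset u ∩ G.incidenceFinset v = {s(u, v)} := by
    apply coe_injective
    rw [coe_inter, SimpleGraph.coe_incidenceFinset, SimpleGraph.coe_incidenceFinset,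
      SimpleGraph.incidenceSet_inter_incidenceSet_of_adj _ h, coe_singleton]
  have h4 := card_union_add_card_inter (G.incidenceFinset u) (G.incidenceFinset v)
  rw [h3, card_singleton, SimpleGraph.card_incidenceFinset_eq_degree,
    SimpleGraph.card_incidenceFinset_eq_degree] at h4
  have h5 := card_erase_add_one (mem_union_left (G.incidenceFinset v) hmu)
  omega

theorem aux_conn {V : Type*} {G : SimpleGraph V} (hG : G.Connected) (P : V → Prop)
    (hP : ∀ u v, G.Adj u v → P u → P v) {u : V} (hu : P u) (v : V) : P v := by
  obtain ⟨w⟩ := hG.preconnected u v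
  induction w with
  | nil => exact hu
  | cons h _ ih => exact ih (hP _ _ h hu)

theorem aux_alliance {V : Type*} [Finite V] (G : SimpleGraph V)
    (hd : ∀ v, (G.neighborSet v).ncard = 2 ∨ (G.neighborSet v).ncard = 3) (S : Set V) :
    G.IsGlobalStrongOffensiveAlliance S ↔
      S.Nonempty ∧ ∀ v ∉ S, ∀ w, G.Adj v w → w ∈ S := by
  unfold SimpleGraph.IsGlobalStrongOffensiveAlliance
  refine and_congr_right fun _ => forall₂_congr fun v _ => ?_
  have h1 := Set.ncard_inter_add_ncard_diff_eq_ncard (G.neighborSet v) S (Set.toFinite _)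
  have h2 := hd v
  have h3 : (∀ w, G.Adj v w → w ∈ S) ↔ (G.neighborSet v \ S).ncard = 0 := by
    rw [Set.ncard_eq_zero (Set.toFinite _), Set.diff_eq_empty]
    rfl
  rw [h3]
  omega

theorem aux_num {V : Type*} (G : SimpleGraph V) (k : ℕ)
    (h1 : ∃ S : Set V, G.IsGlobalStrongOffensiveAlliance S ∧ S.ncard = k)
    (h2 : ∀ S : Set V, G.IsGlobalStrongOffensiveAlliance S → k ≤ S.ncard) :
    G.globalStrongOffensiveAllianceNum = k := by
  apply le_antisymm
  · exact Nat.sInf_le h1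
  · apply le_csInf ⟨k, h1⟩
    rintro _ ⟨S, hS, rfl⟩
    exact h2 S hS

open Finset in
theorem aux_deg {V : Type*} [Fintype V] [DecidableEq V] (G : SimpleGraph V)
    [DecidableRel G.Adj] (hG : G.Connected)
    (h5 : ∀ u v, G.Adj u v → G.degree u + G.degree v = 5)
    (hn : 6 ≤ #G.edgeFinset) (v : V) : G.degree v = 2 ∨ G.degree v = 3 := by
  by_contra hv
  have hno : ∀ w, ¬ (G.degree w = 2 ∨ G.degree w = 3) := by
    apply aux_conn hG (fun w => ¬ (G.degree w = 2 ∨ G.degree w = 3)) _ hv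
    intro a b hab ha
    have := h5 a b hab
    omega
  have hc : ∃ c, G.degree c = 4 := by
    obtain ⟨e, he⟩ := card_pos.1 (lt_of_lt_of_le (by norm_num) hn)
    induction e with
    | _ a b =>
      have hab : G.Adj a b := by simpa using he
      have h1 := h5 a b hab
      have h2 := hno a
      have h3 : 0 < G.degree a := (G.degree_pos_iff_exists_adj a).2 ⟨b, hab⟩
      have h4 : 0 < G.degree b := (G.degree_pos_iff_exists_adj b).2 ⟨a, hab.symm⟩
      by_cases h : G.degree a = 4
      · exact ⟨a, h⟩
      · exact ⟨b, by omega⟩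
  obtain ⟨c, hc⟩ := hc
  have hall : ∀ w, w = c ∨ G.Adj c w := by
    apply aux_conn hG (fun w => w = c ∨ G.Adj c w) _ (Or.inl rfl)
    rintro a b hab (rfl | ha)
    · exact Or.inr hab
    · left
      have h1 : G.degree a = 1 := by have := h5 c a ha; omega
      obtain ⟨x, hx⟩ := card_eq_one.1 h1
      have hb : b ∈ G.neighborFinset a := by simpa using hab
      have hc' : c ∈ G.neighborFinset a := by simpa using ha.symm
      rw [hx, mem_singleton] at hb hc'
      rw [hb, hc']
  have hsub : G.edgeFinset ⊆ G.incidenceFinset c := by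
    intro e he
    induction e with
    | _ a b =>
      have hab : G.Adj a b := by simpa using he
      rw [SimpleGraph.mem_incidenceFinset]
      refine ⟨hab, ?_⟩
      rw [Sym2.mem_iff]
      by_contra hne
      push Not at hne
      have ha := (hall a).resolve_left (Ne.symm hne.1)
      have hb := (hall b).resolve_left (Ne.symm hne.2)
      have := h5 c a ha
      have := h5 c b hb
      have := h5 a b hab
      omega
  have := card_le_card hsub
  rw [SimpleGraph.card_incidenceFinset_eq_degree] at this
  omega

open Finset in
theorem aux_match {V : Type*} [Fintype V] [DecidableEq V] (G : SimpleGraph V)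
    [DecidableRel G.Adj]
    (hd : ∀ v, G.degree v = 2 ∨ G.degree v = 3)
    (h5 : ∀ u v, G.Adj u v → G.degree u + G.degree v = 5) :
    ∃ f : {v // G.degree v = 3} → V, Function.Injective f ∧ ∀ x, G.Adj x.1 (f x) := by
  have key := (Finset.all_card_le_biUnion_card_iff_exists_injective
    (fun x : {v // G.degree v = 3} => G.neighborFinset x.1)).1 ?_
  · obtain ⟨f, hf, h⟩ := key
    exact ⟨f, hf, fun x => by simpa using h x⟩
  intro s
  have := card_mul_le_card_mul (s := s) (t := s.biUnion fun x => G.neighborFinset x.1)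
    (fun a b => G.Adj a.1 b) (m := 3) (n := 2) ?_ ?_
  · omega
  · intro a ha
    refine le_trans (le_of_eq (a.2.symm.trans
      (SimpleGraph.card_neighborFinset_eq_degree ..).symm)) ?_
    apply card_le_card
    intro b hb
    rw [mem_bipartiteAbove]
    exact ⟨mem_biUnion.2 ⟨a, ha, hb⟩, by simpa using hb⟩
  · intro b hb
    obtain ⟨a, ha, hab⟩ := mem_biUnion.1 hb
    have h1 := h5 a b (by simpa using hab)
    have h2 : G.degree b = 2 := by have := a.2; omega
    rw [← h2, ← SimpleGraph.card_neighborFinset_eq_degree]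
    refine card_le_card_of_injOn Subtype.val ?_ (Subtype.val_injective.injOn)
    intro x hx
    have := (mem_bipartiteBelow _).1 hx
    simpa using this.2.symm

open Finset in
theorem stmt_5 {V : Type*} [Fintype V] [DecidableEq V] (G₁ : SimpleGraph V)
    [DecidableRel G₁.Adj]
    (hconn₁ : G₁.Connected) (hconn : G₁.lineGraph.Connected)
    (hcubic : ∀ e : G₁.edgeSet, (G₁.lineGraph.neighborSet e).ncard = 3)
    (hn : 6 ≤ Fintype.card G₁.edgeSet) :
    G₁.lineGraph.globalStrongOffensiveAllianceNum = 2 * G₁.globalStrongOffensiveAllianceNum ∧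
      (G₁.lineGraph.globalStrongOffensiveAllianceNum : ℝ) = 2 * Fintype.card G₁.edgeSet / 3 := by
  have hE : Fintype.card G₁.edgeSet = #G₁.edgeFinset := by
    rw [SimpleGraph.edgeFinset_card]
  have h5 : ∀ u v, G₁.Adj u v → G₁.degree u + G₁.degree v = 5 := by
    intro u v h
    have h1 := aux_deg_sum G₁ h
    rw [hcubic] at h1
    omega
  have hd := aux_deg G₁ hconn₁ h5 (hE ▸ hn)
  have hdn : ∀ v, (G₁.neighborSet v).ncard = G₁.degree v := by
    intro v
    rw [Set.ncard_eq_toFinset_card']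
    rfl
  set A : Finset V := univ.filter fun v => G₁.degree v = 3 with hA
  set B : Finset V := univ.filter fun v => G₁.degree v = 2 with hB
  have hbip : G₁.IsBipartiteWith (A : Set V) (B : Set V) := by
    refine ⟨?_, ?_⟩
    · rw [Set.disjoint_left]
      intro x hx hy
      simp only [hA, hB, coe_filter, mem_univ, true_and, Set.mem_ofPred_eq] at hx hy
      omega
    · intro v w h
      simp only [hA, hB, coe_filter, mem_univ, true_and, Set.mem_ofPred_eq]
      have := h5 v w h
      have := hd v
      omega
  have hcard : 3 * #A = #G₁.edgeFinset := by
    rw [← SimpleGraph.isBipartiteWith_sum_degrees_eq_card_edges hbip,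
      sum_congr rfl (fun x hx => (mem_filter.1 hx).2), sum_const, smul_eq_mul, mul_comm]
  have hnum1 : G₁.globalStrongOffensiveAllianceNum = #A := by
    apply aux_num
    · refine ⟨A, ?_, Set.ncard_coe_finset A⟩
      rw [aux_alliance G₁ (fun v => by rw [hdn]; exact hd v)]
      refine ⟨card_pos.1 (by omega), ?_⟩
      intro v hv w hvw
      simp only [hA, coe_filter, mem_univ, true_and, Set.mem_ofPred_eq] at hv ⊢
      have := h5 v w hvw
      have := hd v
      omega
    · intro S hS
      rw [aux_alliance G₁ (fun v => by rw [hdn]; exact hd v)] at hS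
      classical
      have hsub : G₁.edgeFinset ⊆ S.toFinset.biUnion fun v => G₁.incidenceFinset v := by
        intro e he
        induction e with
        | _ a b =>
          have hab : G₁.Adj a b := by simpa using he
          rw [mem_biUnion]
          by_cases ha : a ∈ S
          · exact ⟨a, by simpa using ha, (SimpleGraph.mem_incidenceFinset ..).2
              ⟨hab, Sym2.mem_mk_left a b⟩⟩
          · exact ⟨b, by simpa using hS.2 a ha b hab, (SimpleGraph.mem_incidenceFinset ..).2
              ⟨hab, Sym2.mem_mk_right a b⟩⟩
      have h1 := card_le_card hsub
      have h2 := card_biUnion_le_card_mul S.toFinset (fun v => G₁.incidenceFinset v) 3 (by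
        intro v _
        rw [SimpleGraph.card_incidenceFinset_eq_degree]
        have := hd v
        omega)
      rw [Set.ncard_eq_toFinset_card' S]
      omega
  have hnum2 : G₁.lineGraph.globalStrongOffensiveAllianceNum = 2 * #A := by
    have hAcard : (Set.univ : Set {v // G₁.degree v = 3}).ncard = #A := by
      rw [Set.ncard_univ, Nat.card_eq_fintype_card, Fintype.card_subtype]
    have hcompl : ∀ T : Set G₁.edgeSet, T.ncard + Tᶜ.ncard = 3 * #A := by
      intro T
      rw [Set.ncard_add_ncard_compl, Nat.card_eq_fintype_card]
      omega
    apply aux_num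
    · obtain ⟨f, hf, hadj⟩ := aux_match G₁ hd h5
      have hf2 : ∀ x, G₁.degree (f x) = 2 := by
        intro x
        have := h5 _ _ (hadj x)
        have := x.2
        omega
      let g : {v // G₁.degree v = 3} → G₁.edgeSet := fun x => ⟨s(x.1, f x), hadj x⟩
      have hg : ∀ x y z, z ∈ (g x).1 → z ∈ (g y).1 → x = y := by
        intro x y z hx hy
        have hx' := Sym2.mem_iff.1 hx
        have hy' := Sym2.mem_iff.1 hy
        have h1 := hf2 x
        have h2 := hf2 y
        have h3 := x.2
        have h4 := y.2
        rcases hx' with hx' | hx' <;> rcases hy' with hy' | hy'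
        · exact Subtype.ext (hx'.symm.trans hy')
        · rw [← hy', hx'] at h2; omega
        · rw [← hx', hy'] at h1; omega
        · exact hf (hx'.symm.trans hy')
      have hginj : Function.Injective g := fun x y hxy =>
        hg x y x.1 (Sym2.mem_mk_left _ _) (hxy ▸ Sym2.mem_mk_left _ _)
      have hT : (g '' Set.univ).ncard = #A := by
        rw [Set.ncard_image_of_injective _ hginj, hAcard]
      have hc := hcompl (g '' Set.univ)
      refine ⟨(g '' Set.univ)ᶜ, ?_, by omega⟩
      rw [aux_alliance _ (fun e => Or.inr (hcubic e))]
      refine ⟨(Set.ncard_pos (Set.toFinite _)).1 (by omega), ?_⟩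
      rintro e he e' ⟨hne, z, hz1, hz2⟩ he'
      rw [Set.notMem_compl_iff] at he
      obtain ⟨x, -, rfl⟩ := he
      obtain ⟨y, -, rfl⟩ := he'
      exact hne (congrArg g (hg x y z hz1 hz2))
    · intro S hS
      rw [aux_alliance _ (fun e => Or.inr (hcubic e))] at hS
      have hc := hcompl S
      have hex : ∀ e : G₁.edgeSet, ∃ a ∈ A, a ∈ e.1 := by
        rintro ⟨e, he⟩
        induction e with
        | _ a b =>
          have hab : G₁.Adj a b := he
          have := h5 a b hab
          rcases hd a with h | h
          · exact ⟨b, by simp only [hA, mem_filter, mem_univ, true_and]; omega,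
              Sym2.mem_mk_right a b⟩
          · exact ⟨a, by simp only [hA, mem_filter, mem_univ, true_and]; omega,
              Sym2.mem_mk_left a b⟩
      choose p hpA hpe using hex
      have hle : Sᶜ.ncard ≤ (A : Set V).ncard := by
        refine Set.ncard_le_ncard_of_injOn p (fun e _ => hpA e) ?_ (Set.toFinite _)
        intro e he e' he' hp
        by_contra hne
        exact he' (hS.2 e he e' ⟨hne, p e, hpe e, hp ▸ hpe e'⟩)
      rw [Set.ncard_coe_finset] at hle
      omega
  refine ⟨by rw [hnum1, hnum2], ?_⟩
  rw [hnum2, hE, ← hcard]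
  push_cast
  ring
end

section
/- Let Γ be a connected δ-regular finite simple graph of order n with δ ≥ 1. Then (n/4)·⌈(2δ−1)/2⌉ ≤ γ_o(L(Γ)) ≤ n(δ+1)/4, where L(Γ) is the line graph of Γ and γ_o denotes the global offensive alliance number. -/
/-- A nonempty set `S` of vertices is a *global offensive alliance* if every vertex
outside `S` has strictly more neighbors inside `S` than outside `S`. -/
def SimpleGraph.IsGlobalOffensiveAlliance {V : Type*} (G : SimpleGraph V) (S : Set V) : Prop :=
  S.Nonempty ∧ ∀ v ∉ S, (G.neighborSet v \ S).ncard + 1 ≤ (G.neighborSet v ∩ S).ncard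

/-- The *global offensive alliance number*: the minimum cardinality of a global offensive
alliance. -/
noncomputable def SimpleGraph.globalOffensiveAllianceNum {V : Type*} (G : SimpleGraph V) : ℕ :=
  sInf {k | ∃ S : Set V, G.IsGlobalOffensiveAlliance S ∧ S.ncard = k}

open Finset in
theorem aux_dc {V E : Type*} [Fintype V] (I : V → E → ℤ) (A B : Finset E) :
    ∑ e ∈ A, ∑ v, I v e * ∑ f ∈ B, I v f = ∑ v, (∑ e ∈ A, I v e) * ∑ f ∈ B, I v f := by
  rw [Finset.sum_comm]
  refine Finset.sum_congr rfl fun v _ => ?_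
  rw [Finset.sum_mul]

theorem aux_sumd {V E : Type*} [Fintype V] (I : V → E → ℤ) (h2 : ∀ e, ∑ v, I v e = 2)
    (T : Finset E) : ∑ v, ∑ e ∈ T, I v e = 2 * (T.card : ℤ) := by
  rw [Finset.sum_comm]
  simp [h2, mul_comm]

theorem aux_lower {V E : Type*} [Fintype V] (I : V → E → ℤ) (δ : ℤ)
    (hδ : 0 ≤ δ) (h2 : ∀ e, ∑ v, I v e = 2) (T : Finset E)
    (hT : ∀ e ∈ T, ∑ v, I v e * ∑ f ∈ T, I v f ≤ δ) :
    4 * (T.card : ℤ) ≤ Fintype.card V * δ := by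
  have h1 := aux_dc I T T
  have h3 := Finset.sum_le_card_nsmul T _ δ hT
  rw [h1, nsmul_eq_mul] at h3
  have h4 := aux_sumd I h2 T
  have h5 := sq_sum_le_card_mul_sum_sq (s := (Finset.univ : Finset V)) (f := fun v => ∑ e ∈ T, I v e)
  rw [h4, Finset.card_univ] at h5
  simp only [pow_two] at h5
  rcases Nat.eq_zero_or_pos T.card with h0 | h0
  · rw [h0]; push_cast; positivity
  · have h0' : (0 : ℤ) < T.card := by exact_mod_cast h0
    have : (Fintype.card V : ℤ) * ∑ v, (∑ e ∈ T, I v e) * ∑ f ∈ T, I v f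
        ≤ Fintype.card V * (T.card * δ) := by gcongr
    have h6 : (4 * (T.card : ℤ)) * T.card ≤ (Fintype.card V * δ) * T.card := by linarith
    exact le_of_mul_le_mul_right h6 h0'

theorem aux_insert {V E : Type*} [Fintype V] [DecidableEq E] (I : V → E → ℤ)
    (h2 : ∀ e, ∑ v, I v e = 2) (hI : ∀ v e, I v e * I v e = I v e) (T : Finset E) (e : E)
    (he : e ∉ T) :
    ∑ v, (∑ f ∈ insert e T, I v f) ^ 2 =
      ∑ v, (∑ f ∈ T, I v f) ^ 2 + 2 * ∑ v, I v e * ∑ f ∈ T, I v f + 2 := by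
  have h := h2 e
  have key : ∑ v, (∑ f ∈ insert e T, I v f) ^ 2 =
      ∑ v, (∑ f ∈ T, I v f) ^ 2 + 2 * ∑ v, I v e * ∑ f ∈ T, I v f + ∑ v, I v e := by
    rw [Finset.mul_sum, ← Finset.sum_add_distrib, ← Finset.sum_add_distrib]
    refine Finset.sum_congr rfl fun v _ => ?_
    rw [Finset.sum_insert he]
    linear_combination hI v e
  rw [key, h]

theorem aux_upper {V E : Type*} [Fintype V] [Fintype E] [DecidableEq E] (I : V → E → ℤ) (δ : ℤ)
    (h2 : ∀ e, ∑ v, I v e = 2) (hr : ∀ v, ∑ e, I v e = δ)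
    (hI : ∀ v e, I v e * I v e = I v e) :
    ∃ T : Finset E, (∀ e ∈ T, ∑ v, I v e * ∑ f ∈ T, I v f ≤ δ) ∧
      Fintype.card V * (δ - 1) ≤ 4 * (T.card : ℤ) := by
  obtain ⟨T, -, hmin⟩ := Finset.exists_min_image (Finset.univ : Finset (Finset E))
    (fun T => ∑ v, (∑ f ∈ T, I v f) ^ 2 - (2 * δ - 1) * (T.card : ℤ)) ⟨∅, Finset.mem_univ _⟩
  refine ⟨T, ?_, ?_⟩
  · intro e he
    have h := hmin (T.erase e) (Finset.mem_univ _)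
    have h3 := aux_insert I h2 hI (T.erase e) e (Finset.notMem_erase e T)
    rw [Finset.insert_erase he] at h3
    have hc : ((T.erase e).card : ℤ) + 1 = T.card := by
      exact_mod_cast Finset.card_erase_add_one he
    have hw : ∑ v, I v e * ∑ f ∈ T, I v f = ∑ v, I v e * ∑ f ∈ T.erase e, I v f + 2 := by
      rw [← h2 e, ← Finset.sum_add_distrib]
      refine Finset.sum_congr rfl fun v _ => ?_
      rw [← Finset.add_sum_erase T _ he]
      linear_combination hI v e
    simp only [← hc] at h
    ring_nf at h h3 hw ⊢
    omega
  · have hS : ∀ e ∈ Tᶜ, δ - 1 ≤ ∑ v, I v e * ∑ f ∈ T, I v f := by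
      intro e he
      have he' : e ∉ T := by simpa using he
      have h := hmin (insert e T) (Finset.mem_univ _)
      have h3 := aux_insert I h2 hI T e he'
      rw [Finset.card_insert_of_notMem he'] at h
      push_cast at h
      ring_nf at h h3 ⊢
      omega
    have h3 := Finset.card_nsmul_le_sum Tᶜ _ (δ - 1) hS
    rw [aux_dc, nsmul_eq_mul] at h3
    have hd : ∀ v, ∑ e ∈ Tᶜ, I v e = δ - ∑ e ∈ T, I v e := fun v => by
      rw [← hr v, ← Finset.sum_add_sum_compl T]; ring
    have h4 := aux_sumd I h2 T
    have h4' := aux_sumd I h2 Tᶜ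
    simp only [hd] at h3 h4'
    have h5 := sq_sum_le_card_mul_sum_sq (s := (Finset.univ : Finset V))
      (f := fun v => ∑ e ∈ T, I v e)
    rw [h4, Finset.card_univ] at h5
    simp only [sub_mul, Finset.sum_sub_distrib, ← Finset.mul_sum, h4, Finset.sum_const,
      Finset.card_univ, nsmul_eq_mul, ← pow_two] at h3 h4'
    set n : ℤ := (Fintype.card V : ℤ)
    set t : ℤ := (T.card : ℤ)
    set s : ℤ := (Tᶜ.card : ℤ)
    set Q := ∑ v, (∑ e ∈ T, I v e) ^ 2
    have hn : 0 ≤ n := Int.natCast_nonneg _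
    have hs : 0 ≤ s := Int.natCast_nonneg _
    have ht : 0 ≤ t := Int.natCast_nonneg _
    rcases hs.eq_or_lt with h0 | h0
    · rw [← h0] at h4'
      linarith
    · skip
      have h6 : n * (s * (δ - 1)) ≤ n * (δ * (2 * t) - Q) := mul_le_mul_of_nonneg_left h3 hn
      have h7 : s * (n * (δ - 1)) ≤ s * (4 * t) := by
        have : n * δ = 2 * s + 2 * t := by linarith
        have h8 : n * (δ * (2 * t)) = (2 * s + 2 * t) * (2 * t) := by rw [← this]; ring
        linarith
      exact le_of_mul_le_mul_left h7 h0

open Classical in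
/-- incidence indicator -/
noncomputable def auxI {V : Type*} (G : SimpleGraph V) (v : V) (e : G.edgeSet) : ℤ :=
  if v ∈ (e : Sym2 V) then 1 else 0

theorem auxI_sq {V : Type*} (G : SimpleGraph V) (v : V) (e : G.edgeSet) :
    auxI G v e * auxI G v e = auxI G v e := by
  unfold auxI; split_ifs <;> simp

theorem auxI_col {V : Type*} [Fintype V] (G : SimpleGraph V) (e : G.edgeSet) :
    ∑ v, auxI G v e = 2 := by
  classical
  obtain ⟨e, he⟩ := e
  induction e with | _ a b =>
  have hab : a ≠ b := G.ne_of_adj he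
  unfold auxI
  rw [← Finset.sum_filter, Finset.sum_const]
  have : (Finset.univ.filter fun v => v ∈ s(a, b)) = {a, b} := by ext; simp
  simp only [this, Finset.card_pair hab]
  simp

theorem auxI_row {V : Type*} [Fintype V] (G : SimpleGraph V) [Fintype G.edgeSet] (v : V) :
    ∑ e, auxI G v e = (G.neighborSet v).ncard := by
  classical
  unfold auxI
  rw [← Finset.sum_filter, Finset.sum_const, nsmul_eq_mul, mul_one, Set.ncard_eq_toFinset_card']
  norm_cast
  symm
  refine Finset.card_bij (fun w hw => ⟨s(v, w), by simpa using hw⟩) ?_ ?_ ?_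
  · intro w hw; simp
  · intro a _ b _ h
    have h' : s(v, a) = s(v, b) := congrArg Subtype.val h
    exact Sym2.congr_right.1 h'
  · rintro ⟨e, he⟩ h
    simp only [Finset.mem_filter, Finset.mem_univ, true_and] at h
    obtain ⟨w, rfl⟩ := h
    exact ⟨w, by simpa using he, rfl⟩

open Classical in
theorem auxI_inner {V : Type*} [Fintype V] (G : SimpleGraph V) (e f : G.edgeSet) :
    ∑ v, auxI G v e * auxI G v f =
      (if G.lineGraph.Adj e f then 1 else 0) + (if e = f then 2 else 0) := by
  by_cases hef : e = f
  · subst hef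
    simp [auxI_sq, auxI_col]
  · simp only [hef, if_false, add_zero, SimpleGraph.lineGraph_adj_iff_exists, ne_eq,
      not_false_eq_true, true_and]
    split_ifs with h
    · obtain ⟨v, hv, hv'⟩ := h
      rw [Finset.sum_eq_single v]
      · simp [auxI, hv, hv']
      · intro w _ hw
        by_contra hc
        have h1 : w ∈ (e : Sym2 V) := by by_contra hx; simp [auxI, hx] at hc
        have h2 : w ∈ (f : Sym2 V) := by by_contra hx; simp [auxI, hx] at hc
        apply hef
        ext1
        rw [(Sym2.mem_and_mem_iff hw).1 ⟨h1, hv⟩, (Sym2.mem_and_mem_iff hw).1 ⟨h2, hv'⟩]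
      · simp
    · refine Finset.sum_eq_zero fun v _ => ?_
      push Not at h
      by_cases hv : v ∈ (e : Sym2 V)
      · simp [auxI, h v hv]
      · simp [auxI, hv]

open Classical in
theorem auxI_w {V : Type*} [Fintype V] (G : SimpleGraph V) (A : Finset G.edgeSet) (e : G.edgeSet) :
    ∑ v, auxI G v e * ∑ f ∈ A, auxI G v f =
      ((G.lineGraph.neighborSet e ∩ A).ncard : ℤ) + if e ∈ A then 2 else 0 := by
  simp only [Finset.mul_sum]
  rw [Finset.sum_comm]
  simp only [auxI_inner, Finset.sum_add_distrib]
  congr 1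
  · rw [← Finset.sum_filter, Finset.sum_const, nsmul_eq_mul, mul_one]
    rw [← Set.ncard_coe_finset]
    congr 2
    ext f
    simp [and_comm]
  · simp

open Classical in
theorem aux_alliance_s6 {V : Type*} [Fintype V] (G : SimpleGraph V) (δ : ℕ)
    (hreg : ∀ v : V, (G.neighborSet v).ncard = δ) (T : Finset G.edgeSet) (e : G.edgeSet)
    (he : e ∈ T) :
    (G.lineGraph.neighborSet e \ ((T : Set G.edgeSet)ᶜ)).ncard + 1 ≤
      (G.lineGraph.neighborSet e ∩ ((T : Set G.edgeSet)ᶜ)).ncard ↔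
    ∑ v, auxI G v e * ∑ f ∈ T, auxI G v f ≤ δ := by
  have h1 := auxI_w G T e
  have h2 := auxI_w G Tᶜ e
  have h3 : ∑ v, auxI G v e * ∑ f ∈ T, auxI G v f + ∑ v, auxI G v e * ∑ f ∈ Tᶜ, auxI G v f
      = 2 * δ := by
    rw [← Finset.sum_add_distrib]
    simp only [← mul_add, Finset.sum_add_sum_compl, auxI_row, hreg]
    rw [← Finset.sum_mul, auxI_col]
  simp only [he, if_true, Finset.mem_compl, not_true_eq_false, if_false, Finset.coe_compl] at h1 h2
  rw [Set.sdiff_compl]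
  omega

theorem stmt_6 {V : Type*} [Fintype V] (G : SimpleGraph V) (δ : ℕ)
    (hconn : G.Connected) (hreg : ∀ v : V, (G.neighborSet v).ncard = δ) (hδ : 1 ≤ δ) :
    (Fintype.card V : ℝ) / 4 * ⌈(2 * (δ : ℝ) - 1) / 2⌉ ≤
        G.lineGraph.globalOffensiveAllianceNum ∧
      (G.lineGraph.globalOffensiveAllianceNum : ℝ) ≤ Fintype.card V * (δ + 1) / 4 := by
  classical
  have hceil : ⌈(2 * (δ : ℝ) - 1) / 2⌉ = (δ : ℤ) := by
    rw [Int.ceil_eq_iff]; push_cast; constructor <;> linarith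
  have hrow : ∀ v, ∑ e, auxI G v e = (δ : ℤ) := fun v => by rw [auxI_row, hreg]
  have hm : (Fintype.card V : ℤ) * δ = 2 * Fintype.card G.edgeSet := by
    have h := aux_sumd (auxI G) (auxI_col G) Finset.univ
    simpa [hrow] using h
  have hcompl : ∀ T : Finset G.edgeSet, ((T : Set G.edgeSet)ᶜ).ncard + T.card =
      Fintype.card G.edgeSet := fun T => by
    rw [← Finset.coe_compl, Set.ncard_coe_finset, Finset.card_compl_add_card]
  obtain ⟨T, hT, hTc⟩ := aux_upper (auxI G) (δ : ℤ) (auxI_col G) hrow (auxI_sq G)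
  have hlow := aux_lower (auxI G) (δ : ℤ) (by positivity) (auxI_col G) T hT
  have hVpos : 0 < Fintype.card V := by
    have := hconn.nonempty
    exact Fintype.card_pos
  have hpos : (0 : ℤ) < Fintype.card V * δ := by positivity
  have hal : G.lineGraph.IsGlobalOffensiveAlliance ((T : Set G.edgeSet)ᶜ) := by
    refine ⟨?_, fun e he => ?_⟩
    · apply Set.nonempty_of_ncard_ne_zero
      have := hcompl T
      omega
    · have he' : e ∈ T := by simpa using he
      exact (aux_alliance_s6 G δ hreg T e he').2 (hT e he')
  constructor
  · obtain ⟨S, hS, hk⟩ := Nat.sInf_mem (s := {k | ∃ S : Set G.edgeSet,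
      G.lineGraph.IsGlobalOffensiveAlliance S ∧ S.ncard = k}) ⟨_, _, hal, rfl⟩
    have hSU : S = ((Sᶜ.toFinset : Finset G.edgeSet) : Set G.edgeSet)ᶜ := by simp
    set U : Finset G.edgeSet := Sᶜ.toFinset with hU
    clear_value U
    subst hSU
    have h1 := aux_lower (auxI G) (δ : ℤ) (by positivity) (auxI_col G) U (fun e he =>
      (aux_alliance_s6 G δ hreg U e he).1 (hS.2 e (by simpa using he)))
    have h2 := hcompl U
    have h3 : (Fintype.card V : ℤ) * δ ≤ 4 * (G.lineGraph.globalOffensiveAllianceNum : ℤ) := by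
      unfold SimpleGraph.globalOffensiveAllianceNum
      rw [← hk]
      omega
    have h4 : (Fintype.card V : ℝ) * δ ≤ 4 * (G.lineGraph.globalOffensiveAllianceNum : ℝ) := by
      exact_mod_cast h3
    rw [hceil]
    push_cast
    linarith
  · have h1 : G.lineGraph.globalOffensiveAllianceNum ≤ ((T : Set G.edgeSet)ᶜ).ncard :=
      Nat.sInf_le ⟨_, hal, rfl⟩
    have h2 := hcompl T
    have h3 : 4 * (G.lineGraph.globalOffensiveAllianceNum : ℤ) ≤ Fintype.card V * (δ + 1) := by
      rw [mul_sub] at hTc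
      rw [mul_add]
      omega
    have h4 : 4 * (G.lineGraph.globalOffensiveAllianceNum : ℝ) ≤ Fintype.card V * (δ + 1) := by
      exact_mod_cast h3
    linarith
end

section
/- Let Γ be a connected cubic graph of order n. Then 3n/4 ≤ γ_ô(L(Γ)) = γ_o(L(Γ)) ≤ n, where L(Γ) is the line graph of Γ, γ_o denotes the global offensive alliance number and γ_ô denotes the global strong offensive alliance number. -/
open Finset in
open scoped Classical in
/-- number of edges of `F` at `x` -/
noncomputable def dg {V : Type*} (F : Finset (Sym2 V)) (x : V) : ℕ := (F.filter (fun e => x ∈ e)).card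

/-- every edge of `F` meets at most one other edge of `F` -/
def GoodF {V : Type*} (F : Finset (Sym2 V)) : Prop :=
  ∀ x y, s(x, y) ∈ F → dg F x + dg F y ≤ 3

section
open Finset
open scoped Classical

lemma dg_insert {V : Type*} (F : Finset (Sym2 V)) (e : Sym2 V) (he : e ∉ F) (x : V) :
    dg (insert e F) x = dg F x + if x ∈ e then 1 else 0 := by
  unfold dg
  rw [filter_insert]
  split_ifs with h
  · rw [card_insert_of_notMem (by simp [he])]
  · rfl

lemma dg_erase {V : Type*} (F : Finset (Sym2 V)) (e : Sym2 V) (he : e ∈ F) (x : V) :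
    dg F x = dg (F.erase e) x + if x ∈ e then 1 else 0 := by
  conv_lhs => rw [← insert_erase he]
  exact dg_insert _ _ (by simp) x

lemma dg_pos {V : Type*} {F : Finset (Sym2 V)} {e : Sym2 V} (he : e ∈ F) {x : V} (hx : x ∈ e) :
    1 ≤ dg F x := by
  unfold dg
  exact card_pos.2 ⟨e, by simp [he, hx]⟩

lemma exists_of_dg_pos {V : Type*} {F : Finset (Sym2 V)} {x : V} (hx : 1 ≤ dg F x) :
    ∃ y, s(x, y) ∈ F := by
  unfold dg at hx
  obtain ⟨e, he⟩ := card_pos.1 hx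
  simp only [mem_filter] at he
  obtain ⟨y, rfl⟩ := he.2
  exact ⟨y, he.1⟩

lemma GoodF.le_two {V : Type*} {F : Finset (Sym2 V)} (h : GoodF F) (x : V) : dg F x ≤ 2 := by
  by_contra hc
  obtain ⟨y, hy⟩ := exists_of_dg_pos (F := F) (x := x) (by omega)
  have := h x y hy
  have := dg_pos hy (x := y) (by simp)
  omega

lemma sum_dg_mul {V : Type*} [Fintype V] (F : Finset (Sym2 V)) (g : V → ℕ) :
    ∑ x, dg F x * g x = ∑ e ∈ F, ∑ x ∈ e.toFinset, g x := by
  have : ∀ e : Sym2 V, ∑ x ∈ e.toFinset, g x = ∑ x, if x ∈ e then g x else 0 := by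
    intro e
    rw [← sum_filter]
    congr 1
    ext x; simp
  simp_rw [this]
  rw [sum_comm]
  refine sum_congr rfl fun x _ => ?_
  rw [← sum_filter, sum_const, dg, smul_eq_mul]

lemma sum_dg {V : Type*} [Fintype V] (G : SimpleGraph V) (F : Finset (Sym2 V))
    (hF : F ⊆ G.edgeFinset) : ∑ x, dg F x = 2 * F.card := by
  have := sum_dg_mul F (fun _ => 1)
  simp only [mul_one] at this
  rw [this, mul_comm, ← smul_eq_mul, ← sum_const]
  refine sum_congr rfl fun e he => ?_
  have h := hF he
  rw [SimpleGraph.mem_edgeFinset] at h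
  rw [← card_eq_sum_ones, Sym2.card_toFinset_of_not_isDiag _ (G.not_isDiag_of_mem_edgeSet h)]

lemma GoodF.card_le {V : Type*} [Fintype V] (G : SimpleGraph V) (F : Finset (Sym2 V))
    (hF : F ⊆ G.edgeFinset) (h : GoodF F) : 4 * F.card ≤ 3 * Fintype.card V := by
  have h1 := sum_dg G F hF
  have h2 : ∑ x, dg F x * dg F x ≤ 3 * F.card := by
    rw [sum_dg_mul, mul_comm, ← smul_eq_mul]
    apply sum_le_card_nsmul
    intro e he
    have hd := G.not_isDiag_of_mem_edgeSet (SimpleGraph.mem_edgeFinset.1 (hF he))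
    induction e with
    | _ x y =>
      have hxy : x ≠ y := by simpa using hd
      have : (s(x, y)).toFinset = {x, y} := by ext; simp
      rw [this, sum_pair hxy]
      exact h x y he
  have h3 : ∑ x, 12 * dg F x ≤ ∑ x, (4 * (dg F x * dg F x) + 9) := by
    apply sum_le_sum
    intro x _
    have := h.le_two x
    interval_cases dg F x <;> simp
  rw [sum_add_distrib, ← mul_sum, ← mul_sum] at h3
  simp at h3
  omega

lemma dg_edge {V : Type*} [Fintype V] (G : SimpleGraph V)
    (hcubic : ∀ v : V, (G.neighborSet v).ncard = 3) (x : V) : dg G.edgeFinset x = 3 := by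
  rw [← hcubic x, Set.ncard_eq_toFinset_card', dg, ← SimpleGraph.incidenceFinset_eq_filter,
    SimpleGraph.card_incidenceFinset_eq_degree, ← SimpleGraph.card_neighborFinset_eq_degree]
  congr 1

lemma dg_sdiff {V : Type*} {E F : Finset (Sym2 V)} (hF : F ⊆ E) (x : V) :
    dg (E \ F) x + dg F x = dg E x := by
  unfold dg
  rw [← card_union_of_disjoint, ← filter_union, sdiff_union_of_subset hF]
  exact disjoint_filter_filter sdiff_disjoint

lemma move {V : Type*} [Fintype V] (G : SimpleGraph V) (F : Finset (Sym2 V))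
    (hF : F ⊆ G.edgeFinset) (h : GoodF F) {u v : V} (huv : G.Adj u v) (hu : dg F u = 0)
    (hv : dg F v ≤ 1) : ∃ F' ⊆ G.edgeFinset, GoodF F' ∧
      (∀ x, 1 ≤ dg F x → 1 ≤ dg F' x) ∧ 1 ≤ dg F' u := by
  have hne : u ≠ v := huv.ne
  have huF : ∀ e ∈ F, u ∉ e := fun e he hue => by
    have := dg_pos he hue; omega
  have huvF : s(u, v) ∉ F := fun hh => huF _ hh (by simp)
  have huvE : s(u, v) ∈ G.edgeFinset := by simpa using huv
  by_cases hw : ∃ w, s(v, w) ∈ F ∧ dg F w = 2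
  · obtain ⟨w, hw, hw2⟩ := hw
    have hvw : v ≠ w := by
      rintro rfl; omega
    have huw : u ≠ w := by
      rintro rfl; omega
    have hv1 : dg F v = 1 := le_antisymm hv (dg_pos hw (by simp))
    have key : ∀ x, dg (insert s(u, v) (F.erase s(v, w))) x + (if x ∈ s(v, w) then 1 else 0)
        = dg F x + if x ∈ s(u, v) then 1 else 0 := by
      intro x
      rw [dg_insert _ _ (by simp [huvF]), dg_erase F _ hw x]
      omega
    have ku := key u
    have kv := key v
    have kw := key w
    simp [hne, hne.symm, huw, huw.symm, hvw, hvw.symm] at ku kv kw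
    have kx : ∀ x, x ≠ u → dg (insert s(u, v) (F.erase s(v, w))) x ≤ dg F x := by
      intro x hx
      have := key x
      by_cases hxv : x = v
      · subst hxv; omega
      · simp [hx, hxv] at this; omega
    refine ⟨insert s(u, v) (F.erase s(v, w)), ?_, ?_, ?_, by omega⟩
    · intro e he
      rcases mem_insert.1 he with rfl | he
      · exact huvE
      · exact hF (mem_of_mem_erase he)
    · intro x y hxy
      rcases mem_insert.1 hxy with he | he
      · rcases Sym2.eq_iff.1 he with ⟨rfl, rfl⟩ | ⟨rfl, rfl⟩ <;> omega
      · have he := mem_of_mem_erase he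
        have h1 := huF _ he
        simp at h1
        have := kx x (Ne.symm h1.1)
        have := kx y (Ne.symm h1.2)
        have := h x y he
        omega
    · intro x hx
      have := key x
      by_cases hxv : x = v
      · subst hxv; omega
      by_cases hxw : x = w
      · subst hxw; omega
      simp [hxv, hxw] at this
      omega
  · push Not at hw
    have key := dg_insert F _ huvF
    have ku := key u
    have kv := key v
    simp at ku kv
    have kx : ∀ x, x ≠ u → x ≠ v → dg (insert s(u, v) F) x = dg F x := by
      intro x hx hxv
      have := key x
      simpa [hx, hxv] using this
    refine ⟨insert s(u, v) F, ?_, ?_, ?_, by omega⟩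
    · intro e he
      rcases mem_insert.1 he with rfl | he
      · exact huvE
      · exact hF he
    · have aux : ∀ y, s(v, y) ∈ F → dg (insert s(u, v) F) v + dg (insert s(u, v) F) y ≤ 3 := by
        intro y hy
        have h1 := huF _ hy
        simp at h1
        have hyv : y ≠ v := by
          rintro rfl
          exact G.not_isDiag_of_mem_edgeSet (SimpleGraph.mem_edgeFinset.1 (hF hy)) (by simp)
        have := kx y (Ne.symm h1.2) hyv
        have := hw y hy
        have := h.le_two y
        omega
      intro x y hxy
      rcases mem_insert.1 hxy with he | he
      · rcases Sym2.eq_iff.1 he with ⟨rfl, rfl⟩ | ⟨rfl, rfl⟩ <;> omega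
      · by_cases hxv : x = v
        · subst hxv; exact aux y he
        by_cases hyv : y = v
        · subst hyv; rw [add_comm]; exact aux x (by rwa [Sym2.eq_swap])
        have h1 := huF _ he
        simp at h1
        rw [kx x (Ne.symm h1.1) hxv, kx y (Ne.symm h1.2) hyv]
        exact h x y he
    · intro x hx
      have := key x
      omega

lemma exists_good {V : Type*} [Fintype V] (G : SimpleGraph V)
    (hcubic : ∀ v : V, (G.neighborSet v).ncard = 3) :
    ∃ F ⊆ G.edgeFinset, GoodF F ∧ Fintype.card V ≤ 2 * F.card := by
  obtain ⟨F, hFm, hmax⟩ := exists_max_image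
    ((univ : Finset (Finset (Sym2 V))).filter (fun F => F ⊆ G.edgeFinset ∧ GoodF F))
    (fun F => ((univ : Finset V).filter (fun x => 1 ≤ dg F x)).card)
    ⟨∅, mem_filter.2 ⟨mem_univ _, empty_subset _, fun x y h => by simp at h⟩⟩
  simp only [mem_filter, mem_univ, true_and] at hFm hmax
  obtain ⟨hF, h⟩ := hFm
  refine ⟨F, hF, h, ?_⟩
  have hnb : ∀ u v, G.Adj u v → dg F u = 0 → dg F v = 2 := by
    intro u v huv hu
    by_contra hv
    have := h.le_two v
    obtain ⟨F', hF', hg, h1, h2⟩ := move G F hF h huv hu (by omega)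
    have := hmax F' ⟨hF', hg⟩
    refine absurd this (not_le.2 (card_lt_card ?_))
    rw [ssubset_iff_of_subset (fun x hx => by simp at hx ⊢; exact h1 x hx)]
    exact ⟨u, by simpa using h2, by simp [hu]⟩
  have hc : ((univ : Finset V).filter (fun x => dg F x = 0)).card * 3 ≤
      ((univ : Finset V).filter (fun x => dg F x = 2)).card * 1 := by
    apply card_mul_le_card_mul G.Adj
    · intro u hu
      simp only [mem_filter, mem_univ, true_and] at hu
      rw [← hcubic u, Set.ncard_eq_toFinset_card']
      apply card_le_card
      intro v hv
      simp at hv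
      simp [mem_bipartiteAbove, hv, hnb u v hv hu]
    · intro b hb
      simp only [mem_filter, mem_univ, true_and] at hb
      have h1 := dg_sdiff hF b
      rw [dg_edge G hcubic, hb] at h1
      have h2 : dg (G.edgeFinset \ F) b = 1 := by omega
      rw [← h2, dg]
      apply card_le_card_of_injOn (fun u => s(b, u))
      · intro u hu
        simp [mem_bipartiteBelow] at hu
        simp [hu.2.symm]
        intro hh
        have := dg_pos hh (x := u) (by simp)
        omega
      · intro u _ u' _ he
        exact Sym2.congr_right.1 he
  have hs := sum_dg G F hF
  have h3 : ∑ x, (dg F x + if dg F x = 0 then 1 else 0) = ∑ x, (1 + if dg F x = 2 then 1 else 0) := by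
    refine sum_congr rfl fun x _ => ?_
    have := h.le_two x
    interval_cases dg F x <;> simp
  rw [sum_add_distrib, sum_add_distrib, ← card_filter, ← card_filter] at h3
  simp only [sum_const, card_univ, smul_eq_mul, mul_one] at h3
  omega

/-- neighbors of an edge inside `T` -/
lemma card_nb {V : Type*} (T : Finset (Sym2 V)) {x y : V} (hxy : x ≠ y) :
    (T.filter (fun f => f ≠ s(x, y) ∧ (x ∈ f ∨ y ∈ f))).card + (if s(x, y) ∈ T then 2 else 0)
      = dg T x + dg T y := by
  have h0 : (T.erase s(x, y)).filter (fun f => x ∈ f ∨ y ∈ f) =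
      T.filter (fun f => f ≠ s(x, y) ∧ (x ∈ f ∨ y ∈ f)) := by
    ext f; simp; tauto
  have h1 : dg (T.erase s(x, y)) x + dg (T.erase s(x, y)) y =
      (T.filter (fun f => f ≠ s(x, y) ∧ (x ∈ f ∨ y ∈ f))).card := by
    rw [← h0, filter_or, card_union_of_disjoint]
    · rfl
    · rw [disjoint_left]
      intro f hf hf'
      simp only [mem_filter, mem_erase] at hf hf'
      exact hf.1.1 ((Sym2.mem_and_mem_iff hxy).1 ⟨hf.2, hf'.2⟩)
  rw [← h1]
  split_ifs with he
  · rw [dg_erase T _ he x, dg_erase T _ he y]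
    simp; omega
  · rw [erase_eq_of_notMem he]; rfl

/-- the edges outside `S` -/
noncomputable def cpl {V : Type*} [Fintype V] (G : SimpleGraph V) (S : Set G.edgeSet) :
    Finset (Sym2 V) := G.edgeFinset.filter (fun e => ∀ h : e ∈ G.edgeSet, (⟨e, h⟩ : G.edgeSet) ∉ S)

lemma cpl_sub {V : Type*} [Fintype V] (G : SimpleGraph V) (S : Set G.edgeSet) :
    cpl G S ⊆ G.edgeFinset := filter_subset _ _

lemma ncard_of_val {V : Type*} (G : SimpleGraph V) (A : Set G.edgeSet)
    (B : Finset (Sym2 V)) (h : ∀ e, e ∈ B ↔ ∃ h : e ∈ G.edgeSet, (⟨e, h⟩ : G.edgeSet) ∈ A) :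
    A.ncard = B.card := by
  rw [← Set.ncard_image_of_injective A Subtype.val_injective, ← Set.ncard_coe_finset]
  congr 1
  ext e
  simp [h]

lemma ncard_add {V : Type*} [Fintype V] (G : SimpleGraph V) (S : Set G.edgeSet) :
    S.ncard + (cpl G S).card = G.edgeFinset.card := by
  rw [ncard_of_val G S (G.edgeFinset \ cpl G S), card_sdiff_add_card_eq_card (cpl_sub G S)]
  intro e
  simp [cpl]
  grind

lemma nb_cond {V : Type*} [Fintype V] (G : SimpleGraph V)
    (hcubic : ∀ v : V, (G.neighborSet v).ncard = 3) (S : Set G.edgeSet) (x y : V)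
    (h : s(x, y) ∈ G.edgeSet) (hS : (⟨s(x, y), h⟩ : G.edgeSet) ∉ S) :
    (G.lineGraph.neighborSet ⟨s(x, y), h⟩ \ S).ncard + 2 = dg (cpl G S) x + dg (cpl G S) y ∧
    (G.lineGraph.neighborSet ⟨s(x, y), h⟩ ∩ S).ncard + (dg (cpl G S) x + dg (cpl G S) y) = 6 := by
  have hxy : x ≠ y := G.ne_of_adj h
  have hadj : ∀ f : G.edgeSet, G.lineGraph.Adj ⟨s(x, y), h⟩ f ↔
      f.1 ≠ s(x, y) ∧ (x ∈ f.1 ∨ y ∈ f.1) := by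
    rintro ⟨f, hf⟩
    rw [SimpleGraph.lineGraph_adj_iff_exists]
    simp only [ne_eq, Subtype.mk.injEq, Sym2.mem_iff]
    constructor
    · rintro ⟨h1, v, rfl | rfl, h3⟩
      · exact ⟨Ne.symm h1, .inl h3⟩
      · exact ⟨Ne.symm h1, .inr h3⟩
    · rintro ⟨h1, h3 | h3⟩
      · exact ⟨Ne.symm h1, x, .inl rfl, h3⟩
      · exact ⟨Ne.symm h1, y, .inr rfl, h3⟩
  have hmem : s(x, y) ∈ cpl G S := by
    simp only [cpl, mem_filter, SimpleGraph.mem_edgeFinset]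
    exact ⟨h, fun _ => hS⟩
  constructor
  · rw [ncard_of_val G _ ((cpl G S).filter (fun f => f ≠ s(x, y) ∧ (x ∈ f ∨ y ∈ f))),
      ← card_nb _ hxy, if_pos hmem]
    intro e
    simp only [cpl, mem_filter, SimpleGraph.mem_edgeFinset, Set.mem_sdiff,
      SimpleGraph.mem_neighborSet, hadj]
    grind
  · have h1 := card_nb (G.edgeFinset \ cpl G S) hxy
    rw [if_neg (by simp [hmem])] at h1
    have h2 := dg_sdiff (cpl_sub G S) x
    have h3 := dg_sdiff (cpl_sub G S) y
    rw [dg_edge G hcubic] at h2 h3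
    rw [ncard_of_val G _ ((G.edgeFinset \ cpl G S).filter
      (fun f => f ≠ s(x, y) ∧ (x ∈ f ∨ y ∈ f)))]
    · omega
    intro e
    simp only [cpl, mem_filter, mem_sdiff, SimpleGraph.mem_edgeFinset, Set.mem_inter_iff,
      SimpleGraph.mem_neighborSet, hadj]
    grind

lemma off_iff {V : Type*} [Fintype V] (G : SimpleGraph V)
    (hcubic : ∀ v : V, (G.neighborSet v).ncard = 3) (S : Set G.edgeSet) (k : ℕ)
    (hk : k = 1 ∨ k = 2) :
    (∀ v ∉ S, (G.lineGraph.neighborSet v \ S).ncard + k ≤ (G.lineGraph.neighborSet v ∩ S).ncard)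
      ↔ GoodF (cpl G S) := by
  constructor
  · intro H x y hxy
    have hh := hxy
    simp only [cpl, mem_filter, SimpleGraph.mem_edgeFinset] at hh
    have h1 := nb_cond G hcubic S x y hh.1 (hh.2 _)
    have h2 := H _ (hh.2 hh.1)
    omega
  · rintro H ⟨e, he⟩ hS
    induction e with
    | _ x y =>
      have h1 := nb_cond G hcubic S x y he hS
      have h2 := H x y (by
        simp only [cpl, mem_filter, SimpleGraph.mem_edgeFinset]
        exact ⟨he, fun _ => hS⟩)
      omega

end


theorem stmt_7 {V : Type*} [Fintype V] (G : SimpleGraph V)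
    (hconn : G.Connected) (hcubic : ∀ v : V, (G.neighborSet v).ncard = 3) :
    3 * (Fintype.card V : ℝ) / 4 ≤ G.lineGraph.globalStrongOffensiveAllianceNum ∧
      G.lineGraph.globalStrongOffensiveAllianceNum =
        G.lineGraph.globalOffensiveAllianceNum ∧
      (G.lineGraph.globalOffensiveAllianceNum : ℝ) ≤ Fintype.card V := by
  classical
  have hE : 2 * G.edgeFinset.card = 3 * Fintype.card V := by
    rw [← sum_dg G _ (Finset.Subset.refl _), Finset.sum_congr rfl (fun x _ => dg_edge G hcubic x)]
    simp [mul_comm]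
  have heq : ∀ S, G.lineGraph.IsGlobalStrongOffensiveAlliance S ↔
      G.lineGraph.IsGlobalOffensiveAlliance S := fun S =>
    and_congr_right fun _ => (off_iff G hcubic S 2 (.inr rfl)).trans
      (off_iff G hcubic S 1 (.inl rfl)).symm
  have heq' : G.lineGraph.globalStrongOffensiveAllianceNum =
      G.lineGraph.globalOffensiveAllianceNum := by
    unfold SimpleGraph.globalStrongOffensiveAllianceNum SimpleGraph.globalOffensiveAllianceNum
    simp_rw [heq]
  obtain ⟨F, hF, hg, hn⟩ := exists_good G hcubic
  let S : Set G.edgeSet := {e | e.1 ∉ F}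
  have hcpl : cpl G S = F := by
    ext e
    simp only [cpl, Finset.mem_filter, SimpleGraph.mem_edgeFinset, S, Set.mem_ofPred_eq, not_not]
    constructor
    · rintro ⟨h1, h2⟩
      exact h2 h1
    · intro h
      exact ⟨SimpleGraph.mem_edgeFinset.1 (hF h), fun _ => h⟩
  have hSc := ncard_add G S
  rw [hcpl] at hSc
  have hle := hg.card_le G F hF
  have hpos : 0 < Fintype.card V := by
    have := hconn.nonempty
    exact Fintype.card_pos
  have hSne : S.Nonempty := Set.nonempty_of_ncard_ne_zero (by omega)
  have hSoff : G.lineGraph.IsGlobalOffensiveAlliance S :=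
    ⟨hSne, (off_iff G hcubic S 1 (.inl rfl)).2 (by rwa [hcpl])⟩
  have hlow : 3 * Fintype.card V ≤ 4 * G.lineGraph.globalOffensiveAllianceNum := by
    obtain ⟨T, hT, hTc⟩ := Nat.sInf_mem
      (s := {k | ∃ S : Set G.edgeSet, G.lineGraph.IsGlobalOffensiveAlliance S ∧ S.ncard = k})
      ⟨_, S, hSoff, rfl⟩
    have h1 := ((off_iff G hcubic T 1 (.inl rfl)).1 hT.2).card_le G _ (cpl_sub G T)
    have h2 := ncard_add G T
    rw [SimpleGraph.globalOffensiveAllianceNum, ← hTc]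
    omega
  have hup : G.lineGraph.globalOffensiveAllianceNum ≤ Fintype.card V :=
    (Nat.sInf_le (⟨S, hSoff, rfl⟩ :
      S.ncard ∈ {k | ∃ S : Set G.edgeSet, G.lineGraph.IsGlobalOffensiveAlliance S ∧ S.ncard = k})).trans
      (by omega)
  refine ⟨?_, heq', by exact_mod_cast hup⟩
  rw [heq', div_le_iff₀ (by norm_num), mul_comm _ (4 : ℝ)]
  exact_mod_cast hlow
end

section
/- Let Γ be a connected δ-regular finite simple graph of order n with δ odd. Then n(δ+1)/(3δ+1) ≤ γ_o(Γ) ≤ n/2, where γ_o(Γ) is the global offensive alliance number of Γ. -/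
open Classical in
/-- Adjacency indicator. -/
noncomputable def adjInd {V : Type*} (G : SimpleGraph V) (u v : V) : ℕ := if G.Adj u v then 1 else 0

theorem adjInd_comm {V : Type*} (G : SimpleGraph V) (u v : V) : adjInd G u v = adjInd G v u := by
  have h := G.adj_comm u v
  unfold adjInd
  by_cases hu : G.Adj u v
  · rw [if_pos hu, if_pos (h.1 hu)]
  · rw [if_neg hu, if_neg (fun hv => hu (h.2 hv))]

open Classical in
theorem ncard_inter_eq {V : Type*} [Fintype V] (G : SimpleGraph V) (v : V) (S : Finset V) :
    (G.neighborSet v ∩ (S : Set V)).ncard = ∑ u ∈ S, adjInd G v u := by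
  have : G.neighborSet v ∩ (S : Set V) = ((S.filter (fun u => G.Adj v u) : Finset V) : Set V) := by
    ext u; simp [and_comm]
  rw [this, Set.ncard_coe_finset, Finset.card_filter]
  rfl

open Classical in
theorem ncard_diff_eq {V : Type*} [Fintype V] (G : SimpleGraph V) (v : V) (S : Finset V) :
    (G.neighborSet v \ (S : Set V)).ncard = ∑ u ∈ Sᶜ, adjInd G v u := by
  rw [← ncard_inter_eq, Finset.coe_compl, Set.sdiff_eq]

open Classical in
/-- The size of the cut defined by `S`. -/
noncomputable def cutSize {V : Type*} [Fintype V] (G : SimpleGraph V) (S : Finset V) : ℕ :=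
  ∑ u ∈ S, ∑ w ∈ Sᶜ, adjInd G u w

open Classical in
theorem cutSize_compl {V : Type*} [Fintype V] (G : SimpleGraph V) (S : Finset V) :
    cutSize G Sᶜ = cutSize G S := by
  unfold cutSize
  rw [compl_compl, Finset.sum_comm]
  exact Finset.sum_congr rfl fun u _ => Finset.sum_congr rfl fun w _ => adjInd_comm G w u

open Classical in
theorem cut_local {V : Type*} [Fintype V] (G : SimpleGraph V) (S : Finset V)
    (hS : ∀ T, cutSize G T ≤ cutSize G S) (v : V) (hv : v ∉ S) :
    ∑ u ∈ Sᶜ, adjInd G v u ≤ ∑ u ∈ S, adjInd G v u := by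
  have h := hS (insert v S)
  have hc : Sᶜ = insert v (insert v S)ᶜ := by
    ext x; by_cases hx : x = v <;> simp [hx, hv]
  have hn : v ∉ (insert v S)ᶜ := by simp
  unfold cutSize at h
  rw [hc] at h ⊢
  rw [Finset.sum_insert hn]
  simp only [Finset.sum_insert hn, Finset.sum_insert hv, Finset.sum_add_distrib] at h
  have h0 : adjInd G v v = 0 := by simp [adjInd]
  have h1 : ∑ u ∈ S, adjInd G u v = ∑ u ∈ S, adjInd G v u :=
    Finset.sum_congr rfl fun u _ => adjInd_comm G u v
  omega

open Classical in
theorem deg_split {V : Type*} [Fintype V] (G : SimpleGraph V) (v : V) (S : Finset V) :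
    ∑ u ∈ S, adjInd G v u + ∑ u ∈ Sᶜ, adjInd G v u = (G.neighborSet v).ncard := by
  rw [Finset.sum_add_sum_compl, ← ncard_inter_eq]; simp

open Classical in
theorem cut_alliance {V : Type*} [Fintype V] [Nonempty V] (G : SimpleGraph V) (δ : ℕ)
    (hreg : ∀ v : V, (G.neighborSet v).ncard = δ) (hδ : Odd δ) (S : Finset V)
    (hS : ∀ T, cutSize G T ≤ cutSize G S) : G.IsGlobalOffensiveAlliance (S : Set V) := by
  have key : ∀ v ∉ S, ∑ u ∈ Sᶜ, adjInd G v u + 1 ≤ ∑ u ∈ S, adjInd G v u := by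
    intro v hv
    have h1 := cut_local G S hS v hv
    have h2 := deg_split G v S
    rw [hreg] at h2
    obtain ⟨k, hk⟩ := hδ
    omega
  refine ⟨?_, fun v hv => ?_⟩
  · by_contra h
    rw [Set.not_nonempty_iff_eq_empty, Finset.coe_eq_empty] at h
    subst h
    have := key (Classical.arbitrary V) (by simp)
    simp at this
  · rw [ncard_inter_eq, ncard_diff_eq]
    exact key v (by simpa using hv)

open Classical in
theorem alliance_lower {V : Type*} [Fintype V] (G : SimpleGraph V) (δ : ℕ)
    (hreg : ∀ v : V, (G.neighborSet v).ncard = δ) (S : Finset V)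
    (hS : G.IsGlobalOffensiveAlliance (S : Set V)) :
    Fintype.card V * (δ + 1) ≤ S.card * (3 * δ + 1) := by
  have h1 : Sᶜ.card * (δ + 1) ≤ ∑ v ∈ Sᶜ, 2 * ∑ u ∈ S, adjInd G v u := by
    rw [← smul_eq_mul]
    apply Finset.card_nsmul_le_sum
    intro v hv
    have h := hS.2 v (by simpa using hv)
    rw [ncard_inter_eq, ncard_diff_eq] at h
    have h2 := deg_split G v S
    rw [hreg] at h2
    omega
  have h2 : ∑ u ∈ S, ∑ v ∈ Sᶜ, adjInd G u v ≤ S.card * δ := by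
    rw [← smul_eq_mul]
    apply Finset.sum_le_card_nsmul
    intro v hv
    have h2 := deg_split G v S
    rw [hreg] at h2
    omega
  have h3 := cutSize_compl G S
  unfold cutSize at h3
  rw [compl_compl] at h3
  rw [← Finset.mul_sum, h3] at h1
  have h4 := Finset.card_add_card_compl S
  rw [← h4]
  nlinarith

theorem stmt_9 {V : Type*} [Fintype V] (G : SimpleGraph V) (δ : ℕ)
    (hconn : G.Connected) (hreg : ∀ v : V, (G.neighborSet v).ncard = δ) (hδ : Odd δ) :
    (Fintype.card V : ℝ) * (δ + 1) / (3 * δ + 1) ≤ G.globalOffensiveAllianceNum ∧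
      (G.globalOffensiveAllianceNum : ℝ) ≤ Fintype.card V / 2 := by
  classical
  have := hconn.nonempty
  obtain ⟨S, hS⟩ := Finite.exists_max (cutSize G)
  have hA := cut_alliance G δ hreg hδ S hS
  have hB := cut_alliance G δ hreg hδ Sᶜ (fun T => by rw [cutSize_compl]; exact hS T)
  have hle : ∀ T : Finset V, G.IsGlobalOffensiveAlliance (T : Set V) →
      G.globalOffensiveAllianceNum ≤ T.card := fun T hT =>
    Nat.sInf_le ⟨T, hT, Set.ncard_coe_finset T⟩
  constructor
  · have hmem : G.globalOffensiveAllianceNum ∈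
        {k | ∃ S : Set V, G.IsGlobalOffensiveAlliance S ∧ S.ncard = k} :=
      Nat.sInf_mem ⟨_, S, hA, rfl⟩
    obtain ⟨T, hT, hk⟩ := hmem
    have hT' : ((T.toFinset : Finset V) : Set V) = T := by simp
    have h := alliance_lower G δ hreg T.toFinset (by rwa [hT'])
    rw [← hk, ← hT', Set.ncard_coe_finset, div_le_iff₀ (by positivity)]
    exact_mod_cast h
  · have h1 := hle _ hA
    have h2 := hle _ hB
    have h3 := Finset.card_add_card_compl S
    have h4 : G.globalOffensiveAllianceNum * 2 ≤ Fintype.card V := by omega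
    rw [le_div_iff₀ (by norm_num)]
    exact_mod_cast h4
end

section
/- Let Γ be a connected cubic graph of order n. Then 2n/5 ≤ γ_o(Γ) ≤ n/2, where γ_o(Γ) is the global offensive alliance number of Γ. -/
open Classical in
/-- Spin vector of a vertex set. -/
noncomputable def goaSpin {V : Type*} (S : Set V) (v : V) : ℤ := if v ∈ S then 1 else -1

open Classical in
lemma goa_ncard_sum {V : Type*} [Fintype V] (T : Set V) :
    (T.ncard : ℤ) = ∑ w, if w ∈ T then 1 else 0 := by
  rw [Set.ncard_eq_toFinset_card']
  simp

open Classical in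
lemma goa_exists_cut {V : Type*} [Fintype V] (G : SimpleGraph V) :
    ∃ S : Set V, ∀ v, goaSpin S v * ∑ w, G.adjMatrix ℤ v w * goaSpin S w ≤ 0 := by
  obtain ⟨S, hS⟩ := Finite.exists_min
    (fun S : Set V => goaSpin S ⬝ᵥ ((G.adjMatrix ℤ).mulVec (goaSpin S)))
  refine ⟨S, fun v => ?_⟩
  have h := hS (symmDiff S {v})
  have e : goaSpin (symmDiff S {v}) = goaSpin S + Pi.single v (-2 * goaSpin S v) := by
    ext w
    by_cases hw : w = v
    · subst hw
      by_cases hs : w ∈ S <;> simp [goaSpin, Set.mem_symmDiff, hs]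
    · by_cases hs : w ∈ S <;> simp [goaSpin, Set.mem_symmDiff, hs, hw]
  have sym : goaSpin S ⬝ᵥ ((G.adjMatrix ℤ).mulVec (Pi.single v (-2 * goaSpin S v)))
      = Pi.single v (-2 * goaSpin S v) ⬝ᵥ ((G.adjMatrix ℤ).mulVec (goaSpin S)) := by
    rw [Matrix.dotProduct_mulVec, ← Matrix.mulVec_transpose, SimpleGraph.transpose_adjMatrix,
      dotProduct_comm]
  have diag : Pi.single v (-2 * goaSpin S v) ⬝ᵥ
      ((G.adjMatrix ℤ).mulVec (Pi.single v (-2 * goaSpin S v))) = 0 := by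
    simp [single_dotProduct, Matrix.mulVec_single]
  have val : Pi.single v (-2 * goaSpin S v) ⬝ᵥ ((G.adjMatrix ℤ).mulVec (goaSpin S))
      = -2 * (goaSpin S v * ∑ w, G.adjMatrix ℤ v w * goaSpin S w) := by
    rw [single_dotProduct, mul_assoc]; rfl
  simp only [e, Matrix.mulVec_add, add_dotProduct, dotProduct_add, sym, diag, val] at h
  linarith

open Classical in
lemma goa_local_sum {V : Type*} [Fintype V] (G : SimpleGraph V) (S : Set V) (v : V) :
    ∑ w, G.adjMatrix ℤ v w * goaSpin S w
      = ((G.neighborSet v ∩ S).ncard : ℤ) - (G.neighborSet v \ S).ncard := by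
  rw [goa_ncard_sum, goa_ncard_sum, ← Finset.sum_sub_distrib]
  refine Finset.sum_congr rfl fun w _ => ?_
  by_cases h : G.Adj v w <;> by_cases hs : w ∈ S <;> simp [goaSpin, h, hs]

lemma goa_split {V : Type*} [Fintype V] (G : SimpleGraph V)
    (hcubic : ∀ v : V, (G.neighborSet v).ncard = 3) (S : Set V) (v : V) :
    (G.neighborSet v ∩ S).ncard + (G.neighborSet v \ S).ncard = 3 := by
  rw [← hcubic v]; exact Set.ncard_inter_add_ncard_diff_eq_ncard _ _ (Set.toFinite _)

lemma goa_upper {V : Type*} [Fintype V] [Nonempty V] (G : SimpleGraph V)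
    (hcubic : ∀ v : V, (G.neighborSet v).ncard = 3) :
    ∃ S : Set V, G.IsGlobalOffensiveAlliance S ∧ 2 * S.ncard ≤ Fintype.card V := by
  obtain ⟨S, hS⟩ := goa_exists_cut G
  have key : ∀ T : Set V, (∀ v ∉ T, (G.neighborSet v \ T).ncard + 1 ≤
      (G.neighborSet v ∩ T).ncard) → G.IsGlobalOffensiveAlliance T := by
    intro T hT
    refine ⟨?_, hT⟩
    by_contra hne
    rw [Set.not_nonempty_iff_eq_empty] at hne
    subst hne
    have := hT (Classical.arbitrary V) (by simp)
    simp at this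
  have h1 : G.IsGlobalOffensiveAlliance S := by
    apply key
    intro v hv
    have h := hS v
    rw [goa_local_sum] at h
    have := goa_split G hcubic S v
    simp only [goaSpin, hv, if_false] at h
    omega
  have h2 : G.IsGlobalOffensiveAlliance Sᶜ := by
    apply key
    intro v hv
    have h := hS v
    rw [goa_local_sum] at h
    have := goa_split G hcubic S v
    have hv' : v ∈ S := by simpa using hv
    simp only [goaSpin, hv', if_true] at h
    rw [Set.diff_compl, ← Set.diff_eq]
    omega
  have hc := Set.ncard_add_ncard_compl S
  rw [Nat.card_eq_fintype_card] at hc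
  by_cases hle : 2 * S.ncard ≤ Fintype.card V
  · exact ⟨S, h1, hle⟩
  · exact ⟨Sᶜ, h2, by omega⟩

open Classical in
lemma goa_lower {V : Type*} [Fintype V] (G : SimpleGraph V)
    (hcubic : ∀ v : V, (G.neighborSet v).ncard = 3) (S : Set V)
    (hS : G.IsGlobalOffensiveAlliance S) : 2 * Fintype.card V ≤ 5 * S.ncard := by
  have h1 : ∀ v, (2 : ℤ) * (if v ∈ Sᶜ then 1 else 0) ≤
      ∑ w, if v ∈ Sᶜ ∧ G.Adj v w ∧ w ∈ S then 1 else 0 := by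
    intro v
    by_cases hv : v ∈ S
    · simp [hv]
    · have a := hS.2 v hv
      have b := goa_split G hcubic S v
      have c := goa_ncard_sum (G.neighborSet v ∩ S)
      simp only [Set.mem_inter_iff, SimpleGraph.mem_neighborSet] at c
      simp only [Set.mem_compl_iff, hv, not_false_eq_true, true_and, if_true]
      rw [← c]
      omega
  have h2 : ∀ w, (∑ v, if v ∈ Sᶜ ∧ G.Adj v w ∧ w ∈ S then (1 : ℤ) else 0) ≤
      3 * (if w ∈ S then 1 else 0) := by
    intro w
    by_cases hw : w ∈ S
    · have c := goa_ncard_sum (G.neighborSet w)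
      rw [hcubic w] at c
      simp only [hw, if_true, mul_one, and_true]
      refine le_trans (Finset.sum_le_sum fun v _ => ?_) c.symm.le
      by_cases hv : G.Adj v w
      · simp only [SimpleGraph.mem_neighborSet, hv, hv.symm]; split_ifs <;> simp_all
      · simp [hv, G.adj_comm w v]
    · simp [hw]
  have h3 := Finset.sum_le_sum fun v (_ : v ∈ Finset.univ) => h1 v
  have h4 := Finset.sum_le_sum fun v (_ : v ∈ Finset.univ) => h2 v
  rw [Finset.sum_comm, ← Finset.mul_sum, ← goa_ncard_sum] at h4
  have hcompl : (Sᶜ.ncard : ℤ) = ∑ i, if i ∈ Sᶜ then 1 else 0 := by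
    rw [goa_ncard_sum]; congr!
  rw [← Finset.mul_sum, ← hcompl] at h3
  have hc := Set.ncard_add_ncard_compl S
  rw [Nat.card_eq_fintype_card] at hc
  have := h3.trans h4
  omega

theorem stmt_10 {V : Type*} [Fintype V] (G : SimpleGraph V)
    (hconn : G.Connected) (hcubic : ∀ v : V, (G.neighborSet v).ncard = 3) :
    2 * (Fintype.card V : ℝ) / 5 ≤ G.globalOffensiveAllianceNum ∧
      (G.globalOffensiveAllianceNum : ℝ) ≤ Fintype.card V / 2 := by
  haveI := hconn.nonempty
  obtain ⟨S, hS, hcard⟩ := goa_upper G hcubic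
  have hmem := Nat.sInf_mem (s := {k | ∃ S : Set V, G.IsGlobalOffensiveAlliance S ∧ S.ncard = k})
    ⟨_, S, hS, rfl⟩
  have hle : G.globalOffensiveAllianceNum ≤ S.ncard := Nat.sInf_le ⟨S, hS, rfl⟩
  obtain ⟨T, hT, hTc⟩ := hmem
  have hlow := goa_lower G hcubic T hT
  have hTc' : T.ncard = G.globalOffensiveAllianceNum := hTc
  rw [hTc'] at hlow
  have hlow' : 2 * (Fintype.card V : ℝ) ≤ 5 * G.globalOffensiveAllianceNum := by exact_mod_cast hlow
  have hup : 2 * G.globalOffensiveAllianceNum ≤ Fintype.card V := by omega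
  have hup' : 2 * (G.globalOffensiveAllianceNum : ℝ) ≤ Fintype.card V := by exact_mod_cast hup
  constructor <;> linarith
end

section
/- Let Γ be a connected cubic graph of order n. Then every global offensive alliance in Γ of cardinality 2n/5 is an independent set. -/
theorem stmt_11 {V : Type*} [Fintype V] (G : SimpleGraph V)
    (hconn : G.Connected) (hcubic : ∀ v : V, (G.neighborSet v).ncard = 3) :
    ∀ S : Set V, G.IsGlobalOffensiveAlliance S →
      (S.ncard : ℝ) = 2 * Fintype.card V / 5 → G.IsIndepVertexSet S := by
  classical
  rintro S ⟨-, hS⟩ hcard u hu v hv - huv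
  have hcard' : 5 * S.ncard = 2 * Fintype.card V := by
    have : (5 * S.ncard : ℝ) = 2 * Fintype.card V := by rw [hcard]; ring
    exact_mod_cast this
  have hcompl : S.toFinset.card + S.toFinsetᶜ.card = Fintype.card V :=
    Finset.card_add_card_compl _
  have hSc : S.ncard = S.toFinset.card := Set.ncard_eq_toFinset_card' S
  have hdc := Finset.sum_card_bipartiteAbove_eq_sum_card_bipartiteBelow
    (s := S.toFinset) (t := S.toFinsetᶜ) G.Adj
  have h1 : ∀ b ∈ S.toFinsetᶜ, 2 ≤ (S.toFinset.bipartiteBelow G.Adj b).card := by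
    intro b hb
    have hbS : b ∉ S := by simpa using hb
    have e : (G.neighborSet b ∩ S).ncard = (S.toFinset.bipartiteBelow G.Adj b).card := by
      rw [← Set.ncard_coe_finset]
      congr 1
      ext x
      simp [Finset.bipartiteBelow, G.adj_comm, and_comm]
    have := hS b hbS
    have h3 := Set.ncard_inter_add_ncard_diff_eq_ncard (G.neighborSet b) S (Set.toFinite _)
    have := hcubic b
    omega
  have h2 : ∀ a ∈ S.toFinset, (S.toFinsetᶜ.bipartiteAbove G.Adj a).card = 
      (G.neighborSet a \ S).ncard := by
    intro a ha
    rw [← Set.ncard_coe_finset]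
    congr 1
    ext x
    simp [Finset.bipartiteAbove, and_comm]
  have h4 := fun a => Set.ncard_inter_add_ncard_diff_eq_ncard (G.neighborSet a) S (Set.toFinite _)
  have hlt : ∑ a ∈ S.toFinset, (S.toFinsetᶜ.bipartiteAbove G.Adj a).card
      < ∑ a ∈ S.toFinset, 3 := by
    apply Finset.sum_lt_sum
    · intro a ha
      rw [h2 a ha]
      have := h4 a
      have := hcubic a
      omega
    · refine ⟨u, by simpa using hu, ?_⟩
      rw [h2 u (by simpa using hu)]
      have := h4 u
      have := hcubic u
      have : 0 < (G.neighborSet u ∩ S).ncard := by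
        rw [Set.ncard_pos]
        exact ⟨v, huv, hv⟩
      omega
  have hge := Finset.sum_le_sum h1
  simp only [Finset.sum_const, smul_eq_mul] at hge hlt
  omega
end

section
/- Let Γ be a connected cubic graph. Then Γ has a global strong offensive alliance that is an independent set if and only if Γ is a bipartite graph. -/
theorem stmt_13 {V : Type*} [Fintype V] (G : SimpleGraph V)
    (hconn : G.Connected) (hcubic : ∀ v : V, (G.neighborSet v).ncard = 3) :
    (∃ S : Set V, G.IsGlobalStrongOffensiveAlliance S ∧ G.IsIndepVertexSet S) ↔
      G.Colorable 2 := by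
  have hsum : ∀ (v : V) (S : Set V),
      (G.neighborSet v ∩ S).ncard + (G.neighborSet v \ S).ncard = 3 := by
    intro v S
    rw [← hcubic v]
    exact Set.ncard_inter_add_ncard_sdiff_eq_ncard _ _ (Set.toFinite _)
  constructor
  · rintro ⟨S, ⟨_, hS⟩, hI⟩
    classical
    refine ⟨SimpleGraph.Coloring.mk (fun v => if v ∈ S then (0 : Fin 2) else 1) ?_⟩
    intro u v huv
    by_cases hu : u ∈ S
    · by_cases hv : v ∈ S
      · exact absurd huv (hI hu hv huv.ne)
      · simp [hu, hv]
    · have h0 : (G.neighborSet u \ S).ncard = 0 := by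
        have h1 := hS u hu
        have h2 := hsum u S
        omega
      have hv : v ∈ S := by
        by_contra hv
        rw [Set.ncard_eq_zero (Set.toFinite _)] at h0
        have : v ∈ G.neighborSet u \ S := ⟨huv, hv⟩
        rw [h0] at this
        exact this
      simp [hu, hv]
  · rintro ⟨C⟩
    have key : ∀ u v, G.Adj u v → C u ≠ 0 → C v = 0 := by
      intro u v huv hu
      have := C.valid huv
      omega
    refine ⟨{v | C v = 0}, ⟨?_, ?_⟩, ?_⟩
    · obtain ⟨v⟩ := hconn.nonempty
      by_cases hv : C v = 0
      · exact ⟨v, hv⟩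
      · have hne : (G.neighborSet v).Nonempty := by
          apply Set.nonempty_of_ncard_ne_zero
          rw [hcubic v]
          norm_num
        obtain ⟨w, hw⟩ := hne
        exact ⟨w, key v w hw hv⟩
    · intro v hv
      have h0 : G.neighborSet v \ {v | C v = 0} = ∅ := by
        rw [Set.sdiff_eq_empty]
        intro w hw
        exact key v w hw hv
      have h2 := hsum v {v | C v = 0}
      rw [h0, Set.ncard_empty] at *
      omega
    · intro u hu v hv _ huv
      exact C.valid huv (by rw [Set.mem_setOf_eq] at hu hv; rw [hu, hv])
end

section
/- Let Γ be a connected cubic graph of order n that has a global independent offensive alliance. Then 2n/5 ≤ γ_i(Γ) ≤ n/2, where γ_i(Γ) is the global independent offensive alliance number of Γ. -/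
/-- The *global independent offensive alliance number*: the minimum cardinality of a global
offensive alliance which is also an independent set. -/
noncomputable def SimpleGraph.globalIndepOffensiveAllianceNum {V : Type*}
    (G : SimpleGraph V) : ℕ :=
  sInf {k | ∃ S : Set V,
    G.IsGlobalOffensiveAlliance S ∧ G.IsIndepVertexSet S ∧ S.ncard = k}

theorem indep_alliance_bounds {V : Type*} [Fintype V] (G : SimpleGraph V)
    (hcubic : ∀ v : V, (G.neighborSet v).ncard = 3) (S : Set V)
    (hS : G.IsGlobalOffensiveAlliance S) (hI : G.IsIndepVertexSet S) :
    2 * Fintype.card V ≤ 5 * S.ncard ∧ 2 * S.ncard ≤ Fintype.card V := by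
  classical
  have hT : S.toFinset.card + (Finset.univ \ S.toFinset).card = Fintype.card V := by
    rw [add_comm, Finset.card_sdiff_add_card_eq_card (Finset.subset_univ _), Finset.card_univ]
  have hA : ∀ a ∈ S.toFinset,
      ((Finset.univ \ S.toFinset).bipartiteAbove G.Adj a).card = 3 := by
    intro a ha
    rw [Set.mem_toFinset] at ha
    rw [← hcubic a, ← Set.ncard_coe_finset]
    congr 1
    ext b
    simp only [Finset.bipartiteAbove, Finset.coe_filter, Finset.mem_sdiff, Finset.mem_univ,
      true_and, Set.mem_toFinset, Set.mem_setOf_eq, SimpleGraph.mem_neighborSet]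
    exact ⟨fun h => h.2, fun h => ⟨fun hb => hI ha hb h.ne h, h⟩⟩
  have hB : ∀ b, (S.toFinset.bipartiteBelow G.Adj b).card = (G.neighborSet b ∩ S).ncard := by
    intro b
    rw [← Set.ncard_coe_finset]
    congr 1
    ext a
    simp [Finset.bipartiteBelow, G.adj_comm, and_comm]
  have hsum : ∀ b, (G.neighborSet b ∩ S).ncard + (G.neighborSet b \ S).ncard = 3 := by
    intro b
    rw [Set.ncard_inter_add_ncard_sdiff_eq_ncard _ _ (Set.toFinite _), hcubic]
  have h1 : S.toFinset.card * 3 ≤ (Finset.univ \ S.toFinset).card * 3 := by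
    refine Finset.card_mul_le_card_mul G.Adj (fun a ha => (hA a ha).ge) (fun b _ => ?_)
    rw [hB]
    have := hsum b
    omega
  have h2 : (Finset.univ \ S.toFinset).card * 2 ≤ S.toFinset.card * 3 := by
    refine Finset.card_mul_le_card_mul' G.Adj (fun b hb => ?_) (fun a ha => (hA a ha).le)
    rw [hB]
    have h := hS.2 b (by simpa using hb)
    have := hsum b
    omega
  rw [Set.ncard_eq_toFinset_card']
  omega

theorem stmt_15 {V : Type*} [Fintype V] (G : SimpleGraph V)
    (hconn : G.Connected) (hcubic : ∀ v : V, (G.neighborSet v).ncard = 3)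
    (hex : ∃ S : Set V, G.IsGlobalOffensiveAlliance S ∧ G.IsIndepVertexSet S) :
    2 * (Fintype.card V : ℝ) / 5 ≤ G.globalIndepOffensiveAllianceNum ∧
      (G.globalIndepOffensiveAllianceNum : ℝ) ≤ Fintype.card V / 2 := by
  obtain ⟨S₀, h₀, h₀'⟩ := hex
  obtain ⟨S, hS, hI, hk⟩ : G.globalIndepOffensiveAllianceNum ∈ {k | ∃ S : Set V,
      G.IsGlobalOffensiveAlliance S ∧ G.IsIndepVertexSet S ∧ S.ncard = k} :=
    Nat.sInf_mem ⟨_, S₀, h₀, h₀', rfl⟩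
  obtain ⟨h1, h2⟩ := indep_alliance_bounds G hcubic S hS hI
  rw [hk] at h1 h2
  have h1' : (2 : ℝ) * Fintype.card V ≤ 5 * G.globalIndepOffensiveAllianceNum := by
    exact_mod_cast h1
  have h2' : (2 : ℝ) * G.globalIndepOffensiveAllianceNum ≤ Fintype.card V := by
    exact_mod_cast h2
  constructor <;> linarith
end

section
/- Let Γ be a connected cubic graph of order n. If α(Γ) < 2n/5, where α(Γ) is the independence number of Γ, then Γ contains no global independent offensive alliance. -/
theorem stmt_18 {V : Type*} [Fintype V] (G : SimpleGraph V)
    (hconn : G.Connected) (hcubic : ∀ v : V, (G.neighborSet v).ncard = 3)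
    (hα : (G.indepNumber : ℝ) < 2 * Fintype.card V / 5) :
    ¬ ∃ S : Set V, G.IsGlobalOffensiveAlliance S ∧ G.IsIndepVertexSet S := by
  classical
  rintro ⟨S, ⟨_, hS⟩, hind⟩
  have h1 : S.ncard ≤ G.indepNumber := by
    apply le_csSup
    · refine ⟨Fintype.card V, ?_⟩
      rintro k ⟨T, _, rfl⟩
      rw [← Nat.card_eq_fintype_card]
      exact Set.ncard_le_card T
    · exact ⟨S, hind, rfl⟩
  have h2 : ∀ v ∉ S, 2 ≤ (G.neighborSet v ∩ S).ncard := by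
    intro v hv
    have a := hS v hv
    have b := Set.ncard_inter_add_ncard_diff_eq_ncard (G.neighborSet v) S (Set.toFinite _)
    have c := hcubic v
    omega
  have h3 : (S.toFinset)ᶜ.card * 2 ≤ S.toFinset.card * 3 := by
    apply Finset.card_mul_le_card_mul G.Adj
    · intro v hv
      have hv' : v ∉ S := by simpa using hv
      refine (h2 v hv').trans (le_of_eq ?_)
      rw [← Set.ncard_coe_finset]
      congr 1
      ext w
      simp [Finset.bipartiteAbove, and_comm]
    · intro v _
      rw [← hcubic v, ← Set.ncard_coe_finset]
      apply Set.ncard_le_ncard _ (Set.toFinite _)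
      intro w hw
      simp only [Finset.bipartiteBelow, Finset.coe_filter, Set.mem_setOf_eq] at hw
      exact hw.2.symm
  have h4 := Finset.card_add_card_compl S.toFinset
  rw [Set.ncard_eq_toFinset_card'] at h1
  have h5 : 2 * Fintype.card V ≤ 5 * G.indepNumber := by omega
  have h6 : (2 : ℝ) * Fintype.card V ≤ 5 * G.indepNumber := by exact_mod_cast h5
  linarith
end
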